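/- arXiv:math/9705223 — 2 statements merged into one kernel-verified Lean document; each statement's English description precedes it below -/
import Mathlib

section
/- Let n \ge 2 be an integer. There exists an integer N (depending on n and a) such that for every odd integer q > N: (i) for every integer a \ge 1, N_B(n,q,0,a) = N_B(n,q-2n,1,a-1); (ii) for every integer a \ge 1, N_D(n,q,0,a) = N_D(n,q-(2n-2),1,a-1); (iii) for every even integer a \ge 2, N_C(n,q,0,a) = N_C(n,q-2n,1,a-1); (iv) for every even integer a \ge 2, N_{BC}(n,q,0,a) = N_{BC}(n,q-2n,1,a-1). -/
open Polynomial

/-- `x` avoids the integer interval `[u, v]` in `ZMod q`. -/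
def Avoids {q : ℕ} (x : ZMod q) (u v : ℤ) : Prop :=
  ∀ k : ℤ, u ≤ k → k ≤ v → x ≠ (k : ZMod q)

/-- Count for the type `B` deformation: `x_i`, `x_i - x_j` and `x_i + x_j`
all avoid `[u, v]`. -/
noncomputable def N_B (n q : ℕ) (u v : ℤ) : ℕ :=
  Set.ncard {x : Fin n → ZMod q |
    (∀ i, Avoids (x i) u v) ∧
    ∀ i j : Fin n, i < j → Avoids (x i - x j) u v ∧ Avoids (x i + x j) u v}

/-- Count for the type `C` deformation: `2x_i`, `x_i - x_j` and `x_i + x_j`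
all avoid `[u, v]`. -/
noncomputable def N_C (n q : ℕ) (u v : ℤ) : ℕ :=
  Set.ncard {x : Fin n → ZMod q |
    (∀ i, Avoids (2 * x i) u v) ∧
    ∀ i j : Fin n, i < j → Avoids (x i - x j) u v ∧ Avoids (x i + x j) u v}

/-- Count for the type `BC` deformation: `x_i`, `2x_i`, `x_i - x_j` and `x_i + x_j`
all avoid `[u, v]`. -/
noncomputable def N_BC (n q : ℕ) (u v : ℤ) : ℕ :=
  Set.ncard {x : Fin n → ZMod q |
    (∀ i, Avoids (x i) u v ∧ Avoids (2 * x i) u v) ∧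
    ∀ i j : Fin n, i < j → Avoids (x i - x j) u v ∧ Avoids (x i + x j) u v}

/-- Count for the type `D` deformation: `x_i - x_j` and `x_i + x_j`
avoid `[u, v]`. -/
noncomputable def N_D (n q : ℕ) (u v : ℤ) : ℕ :=
  Set.ncard {x : Fin n → ZMod q |
    ∀ i j : Fin n, i < j → Avoids (x i - x j) u v ∧ Avoids (x i + x j) u v}

/-- `1 + y + y^2 + ... + y^(m-1)`. -/
noncomputable def phi (m : ℕ) : ℚ[X] := ∑ i ∈ Finset.range m, X ^ i

/-- `1 + y^2 + y^4 + ... + y^(2(m-1))`. -/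
noncomputable def phi2 (m : ℕ) : ℚ[X] := ∑ i ∈ Finset.range m, X ^ (2 * i)

/-- For `g = ∑_k g_k y^k`, the sum `∑_k g_k (q - k)^n`. -/
noncomputable def polysum (g : ℚ[X]) (q n : ℕ) : ℚ :=
  ∑ k ∈ Finset.range (g.natDegree + 1), g.coeff k * ((q : ℚ) - (k : ℚ)) ^ n

/-!
Represent the residues modulo `q = 2 * m + 1` by integers `± z` with `0 ≤ z ≤ m`, sort the
coordinates of a tuple by absolute value, and record the index and sign of each coordinate in a
label. For `z ≤ z'` in the sorted order, the conditions on the difference and sum of two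
coordinates then become lower bounds for `z' - z`, for `z + z'` and for `q - (z + z')`, the labels
deciding which of them apply. Passing from `[1, a - 1]` to `[0, a]` keeps the labels and raises
each lower bound by one, which is achieved by moving the `k`-th position up by `k` plus a constant.

Conversely, moving the positions down again loses more than one in the distance of remote
positions. Nothing is lost in the end because a bound which holds between neighbours, or at the two
ends of the sorted order, propagates along the labels: between two labels that descend there is a
gap of `a`. In type `C` the tuples for `[1, a - 1]` are represented by half-integers
`± (z + 1 / 2)` instead, since there the bounds concern `2 * z`.
-/

/-! ### Residues as signed points -/

theorem avoids_intCast_iff {q : ℕ} {t u v : ℤ} (ht : -(q : ℤ) < t) (ht' : t < q) (hu : 0 ≤ u)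
    (hv : v < q) :
    Avoids (t : ZMod q) u v ↔ ¬(u ≤ t ∧ t ≤ v) ∧ ¬(u ≤ t + q ∧ t + q ≤ v) := by
  constructor
  · exact fun h => ⟨fun ⟨h₁, h₂⟩ => h t h₁ h₂ rfl, fun ⟨h₁, h₂⟩ => h (t + q) h₁ h₂ (by simp)⟩
  · rintro ⟨h₀, h₁⟩ k hk hk' heq
    obtain ⟨r, hr⟩ := (ZMod.intCast_eq_intCast_iff_dvd_sub _ _ _).1 heq
    have hr_lt : r < 2 := by nlinarith
    have hr_gt : -1 < r := by nlinarith
    obtain rfl | rfl : r = 0 ∨ r = 1 := by omega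
    · exact h₀ (by omega)
    · exact h₁ (by omega)

theorem eq_of_intCast_eq_of_abs_sub_lt {q : ℕ} {s t : ℤ} (h : (s : ZMod q) = t)
    (hlt : |t - s| < q) : s = t :=
  (sub_eq_zero.1 <|
    Int.eq_zero_of_abs_lt_dvd ((ZMod.intCast_eq_intCast_iff_dvd_sub _ _ _).1 h) hlt).symm

theorem exists_intCast_eq (m : ℕ) (x : ZMod (2 * m + 1)) :
    ∃ y : ℤ, -(m : ℤ) ≤ y ∧ y ≤ m ∧ (y : ZMod (2 * m + 1)) = x := by
  have := x.valMinAbs_mem_Ioc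
  exact ⟨x.valMinAbs, by grind, by grind, x.coe_valMinAbs⟩

/-- The signed label of the `i`-th coordinate. Positive coordinates get the labels `-n, …, -1`
and negative ones the labels `n, …, 1`, so that among coordinates with the same absolute value the
difference condition for `i < j` forces a gap exactly when the labels descend. -/
def signedLabel {n : ℕ} (ε : ℤˣ) (i : Fin n) : ℤ := ε * ((i : ℤ) - n)

/-- The integer `± (z - e * m)`. For `e ∈ {0, 1}` its class in `ZMod (2 * m + 1)` is
`± (z + e / 2)`, because `-m` is the inverse of `2`. -/
def signedPoint (m e : ℤ) (ε : ℤˣ) (z : ℤ) : ℤ := ε * (z - e * m)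

/-- The range of the position `z` that makes `± (z + e / 2)` a unique representative in
`ZMod (2 * m + 1)`, the sign being read off from the label `L`. The doubled position `2 * z + e`
runs through `[0, 2 * m + 1]`, and at both ends, which represent `0`, the sign is prescribed. -/
structure IsAdmissible (m e L z : ℤ) : Prop where
  nonneg : 0 ≤ z
  le : z ≤ m
  pos_label : 2 * z + e = 0 → 0 < L
  neg_label : 2 * z + e = 2 * m + 1 → L < 0

theorem signedLabel_one_neg {n : ℕ} (i : Fin n) : signedLabel 1 i < 0 := by
  simp [signedLabel]

theorem signedLabel_neg_one_pos {n : ℕ} (i : Fin n) : 0 < signedLabel (-1) i := by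
  simp [signedLabel]

theorem signedLabel_ne_zero {n : ℕ} (ε : ℤˣ) (i : Fin n) : signedLabel ε i ≠ 0 := by
  obtain rfl | rfl := Int.units_eq_one_or ε
  · exact (signedLabel_one_neg i).ne
  · exact (signedLabel_neg_one_pos i).ne'

theorem signedLabel_injective {n : ℕ} (ε : Fin n → ℤˣ) :
    Function.Injective fun i => signedLabel (ε i) i := by
  intro i j h
  obtain hi | hi := Int.units_eq_one_or (ε i) <;> obtain hj | hj := Int.units_eq_one_or (ε j) <;>
    simp [signedLabel, hi, hj] at h <;> omega

theorem exists_signedPoint_eq {n m : ℕ} {e : ℤ} (he : e = 0 ∨ e = 1) (i : Fin n)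
    (x : ZMod (2 * m + 1)) :
    ∃ ε : ℤˣ, ∃ z : ℤ, IsAdmissible m e (signedLabel ε i) z ∧
      (signedPoint m e ε z : ZMod (2 * m + 1)) = x := by
  suffices h : ∀ y : ℤ, -(m : ℤ) ≤ y → y ≤ m →
      ∃ ε : ℤˣ, ∃ z : ℤ, IsAdmissible m e (signedLabel ε i) z ∧ signedPoint m e ε z = y by
    obtain ⟨y, hy, hy', rfl⟩ := exists_intCast_eq m x
    obtain ⟨ε, z, hadm, hpt⟩ := h y hy hy'
    exact ⟨ε, z, hadm, congrArg _ hpt⟩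
  intro y hy hy'
  have := signedLabel_one_neg i
  have := signedLabel_neg_one_pos i
  obtain rfl | rfl := he <;> obtain hpos | hneg := lt_or_ge 0 y
  · exact ⟨1, y, by constructor <;> omega, by simp [signedPoint]⟩
  · exact ⟨-1, -y, by constructor <;> omega, by simp [signedPoint]⟩
  · exact ⟨-1, m - y, by constructor <;> omega, by simp [signedPoint]⟩
  · exact ⟨1, m + y, by constructor <;> omega, by simp [signedPoint]⟩

theorem eq_and_eq_of_signedPoint_eq {n m : ℕ} {e : ℤ} (he : e = 0 ∨ e = 1) {i : Fin n}
    {ε δ : ℤˣ} {y z : ℤ} (hy : IsAdmissible m e (signedLabel ε i) y)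
    (hz : IsAdmissible m e (signedLabel δ i) z)
    (h : (signedPoint m e ε y : ZMod (2 * m + 1)) = signedPoint m e δ z) : ε = δ ∧ y = z := by
  have := signedLabel_one_neg i
  have := signedLabel_neg_one_pos i
  obtain ⟨hy₀, hy₁, hy₂, hy₃⟩ := hy
  obtain ⟨hz₀, hz₁, hz₂, hz₃⟩ := hz
  have heq : signedPoint m e ε y = signedPoint m e δ z := by
    refine eq_of_intCast_eq_of_abs_sub_lt h (abs_lt.2 ?_)
    obtain rfl | rfl := he <;> obtain rfl | rfl := Int.units_eq_one_or ε <;>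
      obtain rfl | rfl := Int.units_eq_one_or δ <;> simp [signedPoint] <;> omega
  obtain rfl | rfl := he <;> obtain rfl | rfl := Int.units_eq_one_or ε <;>
    obtain rfl | rfl := Int.units_eq_one_or δ <;> simp [signedPoint] at heq ⊢ <;> omega

theorem existsUnique_perm_strictMono_comp {n : ℕ} {α : Type*} [LinearOrder α] {f : Fin n → α}
    (hf : Function.Injective f) : ∃! σ : Equiv.Perm (Fin n), StrictMono (f ∘ σ) := by
  refine ⟨Tuple.sort f,
    (Tuple.monotone_sort f).strictMono_of_injective (hf.comp (Tuple.sort f).injective), ?_⟩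
  intro σ hσ
  exact Equiv.ext fun k =>
    hf (congrFun (Tuple.unique_monotone hσ.monotone (Tuple.monotone_sort f)) k)

theorem forall_lt_iff_forall_perm_lt {n : ℕ} (σ : Equiv.Perm (Fin n))
    (R : Fin n → Fin n → Prop) :
    (∀ i j, i < j → R i j) ↔
      ∀ k l, k < l → (σ k < σ l → R (σ k) (σ l)) ∧ (σ l < σ k → R (σ l) (σ k)) := by
  constructor
  · exact fun h k l _ => ⟨h _ _, h _ _⟩
  · intro h i j hij
    rcases lt_or_gt_of_ne (σ.symm.injective.ne hij.ne) with hlt | hlt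
    · simpa [hij] using (h _ _ hlt).1
    · simpa [hij] using (h _ _ hlt).2

/-! ### Sorted arrangements -/

/-- A tuple in `ZMod (2 * m + 1)` sorted by absolute value: the coordinate in the `k`-th place of
the sorted order has index `perm k`, sign `sign k` and position `pos k`. -/
@[ext]
structure SignedArrangement (n : ℕ) where
  sign : Fin n → ℤˣ
  perm : Equiv.Perm (Fin n)
  pos : Fin n → ℤ

namespace SignedArrangement

variable {n : ℕ}

/-- The signed labels of the coordinates, in sorted order. -/
def label (t : SignedArrangement n) (k : Fin n) : ℤ := signedLabel (t.sign k) (t.perm k)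

/-- The tuple whose sorted version is the given arrangement. -/
def toTuple (m : ℕ) (e : ℤ) (t : SignedArrangement n) (i : Fin n) : ZMod (2 * m + 1) :=
  signedPoint m e (t.sign (t.perm.symm i)) (t.pos (t.perm.symm i))

theorem toTuple_perm (m : ℕ) (e : ℤ) (t : SignedArrangement n) (k : Fin n) :
    t.toTuple m e (t.perm k) = signedPoint m e (t.sign k) (t.pos k) := by
  simp [toTuple]

theorem label_ne_zero (t : SignedArrangement n) (k : Fin n) : t.label k ≠ 0 :=
  signedLabel_ne_zero _ _

theorem label_injective (t : SignedArrangement n) : Function.Injective t.label := by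
  have h := (signedLabel_injective fun i => t.sign (t.perm.symm i)).comp t.perm.injective
  simpa [Function.comp_def, label, funext_iff, Function.Injective] using h

end SignedArrangement

/-- Positions `z` with labels `L` that are admissible and sorted by position, ties being broken by
label. -/
structure IsSortedConfig {n : ℕ} (m e : ℤ) (L z : Fin n → ℤ) : Prop where
  admissible : ∀ k, IsAdmissible m e (L k) (z k)
  strictMono : StrictMono fun k => toLex (z k, L k)

theorem SignedArrangement.bijOn_toTuple (n m : ℕ) {e : ℤ} (he : e = 0 ∨ e = 1) :
    Set.BijOn (toTuple m e) {t : SignedArrangement n | IsSortedConfig m e t.label t.pos}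
      Set.univ := by
  refine ⟨fun _ _ => Set.mem_univ _, ?_, ?_⟩
  · rintro ⟨ε, σ, y⟩ hs ⟨δ, τ, z⟩ ht heq
    have hcoord (i : Fin n) : ε (σ.symm i) = δ (τ.symm i) ∧ y (σ.symm i) = z (τ.symm i) := by
      refine eq_and_eq_of_signedPoint_eq he (i := i) ?_ ?_ (congrFun heq i)
      · simpa [label] using hs.admissible (σ.symm i)
      · simpa [label] using ht.admissible (τ.symm i)
    let key (i : Fin n) : ℤ ×ₗ ℤ := toLex (y (σ.symm i), signedLabel (ε (σ.symm i)) i)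
    have hσ : StrictMono (key ∘ σ) := by simpa [key, label, Function.comp_def] using hs.strictMono
    have hτ : StrictMono (key ∘ τ) := by
      simpa [key, label, Function.comp_def, hcoord] using ht.strictMono
    have hkey : Function.Injective key := fun i j h =>
      signedLabel_injective (fun i => ε (σ.symm i)) (congrArg (fun p => (ofLex p).2) h)
    obtain rfl : σ = τ := (existsUnique_perm_strictMono_comp hkey).unique hσ hτ
    ext1
    · exact funext fun k => by simpa using (hcoord (σ k)).1
    · rfl
    · exact funext fun k => by simpa using (hcoord (σ k)).2
  · intro x _
    choose ε z hadm hpt using fun i => exists_signedPoint_eq he i (x i)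
    let key (i : Fin n) : ℤ ×ₗ ℤ := toLex (z i, signedLabel (ε i) i)
    have hkey : Function.Injective key := fun i j h =>
      signedLabel_injective ε (congrArg (fun p => (ofLex p).2) h)
    obtain ⟨σ, hσ, -⟩ := existsUnique_perm_strictMono_comp hkey
    refine ⟨⟨ε ∘ σ, σ, z ∘ σ⟩, ⟨fun k => hadm (σ k), hσ⟩, funext fun i => ?_⟩
    simpa [toTuple] using hpt i

/-- The condition on a pair of coordinates that is common to the four counts. -/
def AvoidsSubAdd {q : ℕ} (u v : ℤ) (x y : ZMod q) : Prop :=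
  Avoids (x - y) u v ∧ Avoids (x + y) u v

theorem avoidsSubAdd_intCast_iff {m : ℕ} {s t u v : ℤ} (hs : |s| ≤ m) (ht : |t| ≤ m)
    (hu : 0 ≤ u) (hv : v ≤ m) :
    AvoidsSubAdd u v (s : ZMod (2 * m + 1)) t ↔
      (¬(u ≤ s - t ∧ s - t ≤ v) ∧
        ¬(u ≤ s - t + (2 * m + 1) ∧ s - t + (2 * m + 1) ≤ v)) ∧
      ¬(u ≤ s + t ∧ s + t ≤ v) ∧ ¬(u ≤ s + t + (2 * m + 1) ∧ s + t + (2 * m + 1) ≤ v) := by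
  rw [abs_le] at hs ht
  have hsub := avoids_intCast_iff (q := 2 * m + 1) (t := s - t) (v := v)
    (by omega) (by omega) hu (by omega)
  have hadd := avoids_intCast_iff (q := 2 * m + 1) (t := s + t) (v := v)
    (by omega) (by omega) hu (by omega)
  push_cast at hsub hadd
  rw [← hsub, ← hadd, AvoidsSubAdd]

theorem abs_signedPoint_le {m e : ℤ} (he : e = 0 ∨ e = 1) (ε : ℤˣ) {z : ℤ} (hz₀ : 0 ≤ z)
    (hz : z ≤ m) : |signedPoint m e ε z| ≤ m := by
  obtain rfl | rfl := he <;> obtain rfl | rfl := Int.units_eq_one_or ε <;>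
    simp [signedPoint, abs_le] <;> omega

/-- The conditions on two coordinates with labels `L`, `L'` at positions `z ≤ z'` which express
that `x - y` and `x + y` avoid `[u, v]`, where `u ∈ {0, 1}`. The difference of the two
points is constrained when the labels descend, their sum according to the sign of `L + L'`. -/
structure IsSpacedPair (m e u v L L' z z' : ℤ) : Prop where
  le_sub : 1 - u ≤ z' - z
  lt_sub : L' < L → v < z' - z
  lt_add : L + L' < 0 → v < z + z' + e
  add_lt : 0 < L + L' → v < 2 * m + 1 - (z + z' + e)

theorem isSpacedPair_iff {m e u v L L' z z' : ℤ} :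
    IsSpacedPair m e u v L L' z z' ↔
      1 - u ≤ z' - z ∧ (L' < L → v < z' - z) ∧ (L + L' < 0 → v < z + z' + e) ∧
        (0 < L + L' → v < 2 * m + 1 - (z + z' + e)) :=
  ⟨fun ⟨h₁, h₂, h₃, h₄⟩ => ⟨h₁, h₂, h₃, h₄⟩, fun ⟨h₁, h₂, h₃, h₄⟩ => ⟨h₁, h₂, h₃, h₄⟩⟩

theorem avoidsSubAdd_signedPoint_iff {n m : ℕ} {e u v : ℤ} (he : e = 0 ∨ e = 1)
    (hu : u = 0 ∨ u = 1) (hv : 0 ≤ v) (hvm : v ≤ m) {ε δ : ℤˣ} {i j : Fin n} (hij : i ≠ j)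
    {z y : ℤ} (hz : IsAdmissible m e (signedLabel ε i) z)
    (hy : IsAdmissible m e (signedLabel δ j) y)
    (hlt : toLex (z, signedLabel ε i) < toLex (y, signedLabel δ j)) :
    ((i < j → AvoidsSubAdd (q := 2 * m + 1) u v (signedPoint m e ε z) (signedPoint m e δ y)) ∧
      (j < i → AvoidsSubAdd (q := 2 * m + 1) u v (signedPoint m e δ y) (signedPoint m e ε z))) ↔
      IsSpacedPair m e u v (signedLabel ε i) (signedLabel δ j) z y := by
  have := i.isLt
  have := j.isLt
  have hij' : (i : ℕ) ≠ j := Fin.val_ne_of_ne hij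
  obtain ⟨hz₀, hz₁, hz₂, hz₃⟩ := hz
  obtain ⟨hy₀, hy₁, hy₂, hy₃⟩ := hy
  have hz_abs := abs_signedPoint_le he ε hz₀ hz₁
  have hy_abs := abs_signedPoint_le he δ hy₀ hy₁
  have hu₀ : 0 ≤ u := by omega
  rw [isSpacedPair_iff, avoidsSubAdd_intCast_iff hz_abs hy_abs hu₀ hvm,
    avoidsSubAdd_intCast_iff hy_abs hz_abs hu₀ hvm]
  simp only [Prod.Lex.toLex_lt_toLex, Fin.lt_def] at hlt ⊢
  obtain rfl | rfl := he <;> obtain rfl | rfl := hu <;>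
    obtain rfl | rfl := Int.units_eq_one_or ε <;> obtain rfl | rfl := Int.units_eq_one_or δ <;>
    simp [signedPoint, signedLabel] at hlt hz₂ hz₃ hy₂ hy₃ ⊢ <;> omega

/-- The tuples all of whose coordinates satisfy `P` and whose differences and sums avoid
`[u, v]`. -/
def avoidingTuples (n q : ℕ) (u v : ℤ) (P : ZMod q → Prop) : Set (Fin n → ZMod q) :=
  {x | (∀ i, P (x i)) ∧ ∀ i j, i < j → AvoidsSubAdd u v (x i) (x j)}

/-- The sorted configurations that come from tuples whose differences and sums avoid `[u, v]`. -/
structure IsSpacedConfig {n : ℕ} (m e u v : ℤ) (L z : Fin n → ℤ) : Prop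
    extends IsSortedConfig m e L z where
  pair : ∀ k l, k < l → IsSpacedPair m e u v (L k) (L l) (z k) (z l)

/-- The condition on a coordinate with label `L` at position `w ∈ [0, 2 * m + 1]` which expresses
that it avoids `[u, v]`, where `u ∈ {0, 1}`. -/
structure IsSpacedPoint (m u v L w : ℤ) : Prop where
  le : 1 - u ≤ w
  le_add : w ≤ 2 * m + u
  lt_of_neg : L < 0 → v < w
  lt_of_pos : 0 < L → v < 2 * m + 1 - w

theorem isSpacedPoint_iff {m u v L w : ℤ} :
    IsSpacedPoint m u v L w ↔
      1 - u ≤ w ∧ w ≤ 2 * m + u ∧ (L < 0 → v < w) ∧ (0 < L → v < 2 * m + 1 - w) :=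
  ⟨fun ⟨h₁, h₂, h₃, h₄⟩ => ⟨h₁, h₂, h₃, h₄⟩, fun ⟨h₁, h₂, h₃, h₄⟩ => ⟨h₁, h₂, h₃, h₄⟩⟩

theorem avoids_signedPoint_iff {n m : ℕ} {u v : ℤ} (hu : u = 0 ∨ u = 1) (hv : 0 ≤ v) (hvm : v ≤ m)
    (ε : ℤˣ) (i : Fin n) {z : ℤ} (hz : IsAdmissible m 0 (signedLabel ε i) z) :
    Avoids (signedPoint m 0 ε z : ZMod (2 * m + 1)) u v ↔
      IsSpacedPoint m u v (signedLabel ε i) z := by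
  have := signedLabel_one_neg i
  have := signedLabel_neg_one_pos i
  obtain ⟨hz₀, hz₁, hz₂, hz₃⟩ := hz
  have hpt := abs_le.1 (abs_signedPoint_le (Or.inl rfl) ε hz₀ hz₁)
  rw [isSpacedPoint_iff, avoids_intCast_iff (by omega) (by omega) (by omega) (by omega)]
  obtain rfl | rfl := hu <;> obtain rfl | rfl := Int.units_eq_one_or ε <;>
    simp [signedPoint] at hz₂ hz₃ ⊢ <;> omega

theorem avoids_two_mul_signedPoint_iff {n m : ℕ} {e u v : ℤ} (he : e = 0 ∨ e = 1)
    (hu : u = 0 ∨ u = 1) (hv : 0 ≤ v) (hvm : v ≤ m) (ε : ℤˣ) (i : Fin n) {z : ℤ}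
    (hz : IsAdmissible m e (signedLabel ε i) z) :
    Avoids (2 * signedPoint m e ε z : ZMod (2 * m + 1)) u v ↔
      IsSpacedPoint m u v (signedLabel ε i) (2 * z + e) := by
  have := signedLabel_one_neg i
  have := signedLabel_neg_one_pos i
  obtain ⟨hz₀, hz₁, hz₂, hz₃⟩ := hz
  have hpt := abs_le.1 (abs_signedPoint_le he ε hz₀ hz₁)
  have h := avoids_intCast_iff (q := 2 * m + 1) (t := 2 * signedPoint m e ε z) (u := u) (v := v)
    (by omega) (by omega) (by omega) (by omega)
  push_cast at h
  rw [isSpacedPoint_iff, h]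
  obtain rfl | rfl := he <;> obtain rfl | rfl := hu <;>
    obtain rfl | rfl := Int.units_eq_one_or ε <;> simp [signedPoint] at hz₂ hz₃ ⊢ <;> omega

theorem ncard_avoidingTuples {n m : ℕ} {e u v : ℤ} (he : e = 0 ∨ e = 1) (hu : u = 0 ∨ u = 1)
    (hv : 0 ≤ v) (hvm : v ≤ m) {P : ZMod (2 * m + 1) → Prop} {S : ℤ → ℤ → Prop}
    (hP : ∀ ε (i : Fin n) z, IsAdmissible m e (signedLabel ε i) z →
      (P (signedPoint m e ε z) ↔ S (signedLabel ε i) z)) :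
    (avoidingTuples n (2 * m + 1) u v P).ncard =
      {t : SignedArrangement n | IsSpacedConfig m e u v t.label t.pos ∧
        ∀ k, S (t.label k) (t.pos k)}.ncard := by
  have hbij := SignedArrangement.bijOn_toTuple n m he
  have hmem (t : SignedArrangement n) (ht : IsSortedConfig m e t.label t.pos) :
      t.toTuple m e ∈ avoidingTuples n (2 * m + 1) u v P ↔
        (∀ k, S (t.label k) (t.pos k)) ∧
          ∀ k l, k < l → IsSpacedPair m e u v (t.label k) (t.label l) (t.pos k) (t.pos l) := by
    refine and_congr ?_ ?_
    · rw [← t.perm.forall_congr_right]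
      refine forall_congr' fun k => ?_
      rw [t.toTuple_perm]
      exact hP _ _ _ (ht.admissible k)
    · rw [forall_lt_iff_forall_perm_lt t.perm]
      refine forall₃_congr fun k l hkl => ?_
      simp only [t.toTuple_perm]
      exact avoidsSubAdd_signedPoint_iff he hu hv hvm (t.perm.injective.ne hkl.ne)
        (ht.admissible k) (ht.admissible l) (ht.strictMono hkl)
  have himage : avoidingTuples n (2 * m + 1) u v P = SignedArrangement.toTuple m e ''
      ({t | IsSortedConfig m e t.label t.pos} ∩
        SignedArrangement.toTuple m e ⁻¹' avoidingTuples n (2 * m + 1) u v P) := by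
    rw [Set.image_inter_preimage, hbij.image_eq, Set.univ_inter]
  rw [himage, (hbij.injOn.mono Set.inter_subset_left).ncard_image]
  congr 1
  ext t
  constructor
  · rintro ⟨ht, hx⟩
    obtain ⟨hS, hpair⟩ := (hmem t ht).1 hx
    exact ⟨⟨ht, hpair⟩, hS⟩
  · rintro ⟨ht, hS⟩
    exact ⟨ht.toIsSortedConfig, (hmem t ht.toIsSortedConfig).2 ⟨hS, ht.pair⟩⟩

/-! ### Spreading the positions -/

/-- Moves the `k`-th position up by `k + d`. -/
def spread {n : ℕ} (d : ℤ) (z : Fin n → ℤ) (k : Fin n) : ℤ := z k + k + d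

theorem spread_bijective {n : ℕ} (d : ℤ) : Function.Bijective (spread (n := n) d) := by
  refine ⟨fun y z h => funext fun k => ?_, fun z => ⟨fun k => z k - k - d, funext fun k => ?_⟩⟩
  · simpa [spread] using congrFun h k
  · rw [spread]
    ring

theorem SignedArrangement.ncard_setOf_spread {n : ℕ} (d : ℤ)
    (p : (Fin n → ℤ) → (Fin n → ℤ) → Prop) :
    {t : SignedArrangement n | p t.label (spread d t.pos)}.ncard =
      {t : SignedArrangement n | p t.label t.pos}.ncard := by
  refine Set.ncard_preimage_of_injective_subset_range
    (f := fun t : SignedArrangement n => ⟨t.sign, t.perm, spread d t.pos⟩)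
    (s := {t : SignedArrangement n | p t.label t.pos}) ?_ ?_
  · rintro ⟨ε, σ, y⟩ ⟨δ, τ, z⟩ h
    simpa [(spread_bijective d).injective.eq_iff] using h
  · rintro ⟨ε, σ, y⟩ -
    obtain ⟨z, rfl⟩ := (spread_bijective d).surjective y
    exact ⟨⟨ε, σ, z⟩, rfl⟩

section Spread

variable {n : ℕ} {m M a d e : ℤ} {L z : Fin n → ℤ}

theorem isSpacedConfig_spread (hd : 0 ≤ d) (he : 0 ≤ e) (hed : e ≤ d) (hM : M = m + n - 1 + d)
    (h : IsSpacedConfig m e 1 (a - 1) L z) : IsSpacedConfig M 0 0 a L (spread d z) where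
  admissible k := by
    have := k.isLt
    obtain ⟨h₀, h₁, h₂, h₃⟩ := h.admissible k
    constructor <;> simp only [spread] <;> omega
  strictMono k l hkl := by
    have := (h.pair k l hkl).le_sub
    simp only [Prod.Lex.toLex_lt_toLex, spread]
    omega
  pair k l hkl := by
    have := l.isLt
    obtain ⟨h₀, h₁, h₂, h₃⟩ := h.pair k l hkl
    constructor <;> simp only [spread] <;> omega

/-- The relation between positions with labels, written as pairs, which requires a gap of at least
`a` when the labels descend. -/
def DescentGap (a : ℤ) (p q : ℤ × ℤ) : Prop := p.1 ≤ q.1 ∧ (q.2 < p.2 → p.1 + a ≤ q.1)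

theorem DescentGap.refl (p : ℤ × ℤ) : DescentGap a p p := ⟨le_rfl, fun h => (lt_irrefl _ h).elim⟩

theorem DescentGap.trans {p q r : ℤ × ℤ} (hpq : DescentGap a p q)
    (hqr : DescentGap a q r) : DescentGap a p r := by
  simp only [DescentGap] at *
  omega

/-- Although `z l - z k` is smaller by `l - k` than the corresponding difference for `spread d z`,
the gap survives: consecutive differences lose only `1`, and gaps compose. -/
theorem IsSpacedConfig.descentGap (h : IsSpacedConfig M 0 0 a L (spread d z)) {k l : Fin n}
    (hkl : k ≤ l) : DescentGap a (z k, L k) (z l, L l) := by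
  obtain rfl | hlt := hkl.eq_or_lt
  · exact .refl _
  obtain _ | n := n
  · exact k.elim0
  have : IsTrans (ℤ × ℤ) (DescentGap a) := ⟨fun _ _ _ => .trans⟩
  refine (Fin.liftFun_iff_succ (f := fun k => (z k, L k)) (DescentGap a)).2 (fun i => ?_) hlt
  obtain ⟨h₀, h₁, -, -⟩ := h.pair _ _ i.castSucc_lt_succ
  simp only [spread, Fin.val_castSucc, Fin.val_succ] at h₀ h₁
  simp only [DescentGap]
  omega

theorem IsSpacedConfig.of_descentGap (ha : 1 ≤ a) (hL : Function.Injective L)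
    (hadm : ∀ k, IsAdmissible m e (L k) (z k))
    (hgap : ∀ k l, k ≤ l → DescentGap a (z k, L k) (z l, L l))
    (hadd : ∀ k l, k < l → L k + L l < 0 → a ≤ z k + z l + e)
    (hadd' : ∀ k l, k < l → 0 < L k + L l → z k + z l + e + a ≤ 2 * m + 1) :
    IsSpacedConfig m e 1 (a - 1) L z where
  admissible := hadm
  strictMono k l hkl := by
    obtain ⟨h₀, h₁⟩ := hgap k l hkl.le
    have := hL.ne hkl.ne
    simp only [Prod.Lex.toLex_lt_toLex]
    omega
  pair k l hkl := by
    obtain ⟨h₀, h₁⟩ := hgap k l hkl.le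
    have := hadd k l hkl
    have := hadd' k l hkl
    constructor <;> omega

theorem IsSpacedConfig.le (hM : M = m + n - 1 + d) (h : IsSpacedConfig M 0 0 a L (spread d z))
    (k : Fin n) : z k ≤ m := by
  have := k.isLt
  obtain ⟨last, hlast⟩ : ∃ i : Fin n, (i : ℕ) = n - 1 := ⟨⟨n - 1, by omega⟩, rfl⟩
  have hle := (h.admissible last).le
  have hgap := (h.descentGap (show k ≤ last by omega)).1
  simp only [spread] at hle
  omega

/-- It suffices to consider the last two positions: a descent on the way there yields a gap of `a`,
which compensates for the missing condition on the labels. -/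
theorem IsSpacedConfig.add_add_le (hM : M = m + n - 1 + d)
    (h : IsSpacedConfig M 0 0 a L (spread d z)) {k l : Fin n} (hkl : k < l)
    (hpos : 0 < L k + L l) : z k + z l + a ≤ 2 * m + 1 := by
  obtain ⟨i, hi⟩ : ∃ i : Fin n, (i : ℕ) = n - 2 := ⟨⟨n - 2, by omega⟩, rfl⟩
  obtain ⟨j, hj⟩ : ∃ j : Fin n, (j : ℕ) = n - 1 := ⟨⟨n - 1, by omega⟩, rfl⟩
  have hbase := (h.pair i j (by omega)).add_lt
  have hik := h.descentGap (show k ≤ i by omega)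
  have hjl := h.descentGap (show l ≤ j by omega)
  have := h.le hM i
  have := h.le hM j
  simp only [spread, DescentGap] at hbase hik hjl
  omega

theorem IsSpacedConfig.le_add (h : IsSpacedConfig M 0 0 a L (spread 0 z)) {k l : Fin n}
    (hkl : k < l) (hneg : L k + L l < 0) : a ≤ z k + z l := by
  obtain ⟨i, hi⟩ : ∃ i : Fin n, (i : ℕ) = 0 := ⟨⟨0, k.pos⟩, rfl⟩
  obtain ⟨j, hj⟩ : ∃ j : Fin n, (j : ℕ) = 1 := ⟨⟨1, by omega⟩, rfl⟩
  have hbase := (h.pair i j (by omega)).lt_add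
  have hik := h.descentGap (show i ≤ k by omega)
  have hjl := h.descentGap (show j ≤ l by omega)
  have hij := (h.descentGap (show i ≤ j by omega)).1
  have := (h.admissible i).nonneg
  simp only [spread, DescentGap] at *
  omega

theorem isSpacedConfig_spread_zero_iff (ha : 1 ≤ a) (hL : Function.Injective L)
    (hM : M = m + n - 1) :
    IsSpacedConfig M 0 0 a L (spread 0 z) ↔ IsSpacedConfig m 0 1 (a - 1) L z := by
  refine ⟨fun h => ?_, isSpacedConfig_spread le_rfl le_rfl le_rfl (by omega)⟩
  refine .of_descentGap ha hL (fun k => ?_) (fun k l hkl => h.descentGap hkl)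
    (fun k l hkl hneg => ?_) (fun k l hkl hpos => ?_)
  · obtain ⟨first, hfirst⟩ : ∃ i : Fin n, (i : ℕ) = 0 := ⟨⟨0, k.pos⟩, rfl⟩
    have hgap := h.descentGap (show first ≤ k by omega)
    have := h.le (m := m) (d := 0) (by omega) k
    obtain ⟨h₀, -, h₂, -⟩ := h.admissible first
    simp only [spread, DescentGap] at h₀ h₂ hgap
    constructor <;> omega
  · have := h.le_add hkl hneg
    omega
  · have := h.add_add_le (m := m) (d := 0) (by omega) hkl hpos
    omega

theorem IsSpacedConfig.isSpacedPoint (ham : a ≤ m + 1) (hM : M = m + n)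
    (h : IsSpacedConfig M 0 0 a L (spread 1 z))
    (hS : ∀ k, IsSpacedPoint M 0 a (L k) (spread 1 z k)) (k : Fin n) :
    IsSpacedPoint m 1 (a - 1) (L k) (z k) := by
  obtain ⟨first, hfirst⟩ : ∃ i : Fin n, (i : ℕ) = 0 := ⟨⟨0, k.pos⟩, rfl⟩
  have hgap := h.descentGap (show first ≤ k by omega)
  have := h.le (m := m) (d := 1) (by omega) k
  obtain ⟨h₀, -, h₂, -⟩ := hS first
  simp only [spread, DescentGap] at h₀ h₂ hgap
  constructor <;> omega

theorem isSpacedConfig_spread_one_and_isSpacedPoint_iff (ha : 1 ≤ a) (ham : a ≤ m + 1)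
    (hL : Function.Injective L) (hL₀ : ∀ k, L k ≠ 0) (hM : M = m + n) :
    (IsSpacedConfig M 0 0 a L (spread 1 z) ∧
        ∀ k, IsSpacedPoint M 0 a (L k) (spread 1 z k)) ↔
      IsSpacedConfig m 0 1 (a - 1) L z ∧ ∀ k, IsSpacedPoint m 1 (a - 1) (L k) (z k) := by
  constructor
  · rintro ⟨h, hS⟩
    have hpt := h.isSpacedPoint ham hM hS
    refine ⟨.of_descentGap ha hL (fun k => ?_) (fun k l hkl => h.descentGap hkl)
      (fun k l _ hneg => ?_) (fun k l hkl hpos => ?_), hpt⟩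
    · obtain ⟨h₀, -, h₂, -⟩ := hpt k
      have := h.le (m := m) (d := 1) (by omega) k
      have := hL₀ k
      constructor <;> omega
    · obtain ⟨hk₀, -, hk₂, -⟩ := hpt k
      obtain ⟨hl₀, -, hl₂, -⟩ := hpt l
      omega
    · have := h.add_add_le (m := m) (d := 1) (by omega) hkl hpos
      omega
  · rintro ⟨h, hS⟩
    refine ⟨isSpacedConfig_spread zero_le_one le_rfl zero_le_one (by omega) h, fun k => ?_⟩
    obtain ⟨h₀, h₁, h₂, h₃⟩ := hS k
    have := (h.admissible k).le
    constructor <;> simp only [spread] <;> omega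

theorem IsSpacedConfig.isSpacedPoint_two_mul_add_one (hM : M = m + n)
    (h : IsSpacedConfig M 0 0 a L (spread 1 z))
    (hS : ∀ k, IsSpacedPoint M 0 a (L k) (2 * spread 1 z k)) (k : Fin n) :
    IsSpacedPoint m 1 (a - 1) (L k) (2 * z k + 1) := by
  have := k.isLt
  obtain ⟨first, hfirst⟩ : ∃ i : Fin n, (i : ℕ) = 0 := ⟨⟨0, k.pos⟩, rfl⟩
  obtain ⟨last, hlast⟩ : ∃ i : Fin n, (i : ℕ) = n - 1 := ⟨⟨n - 1, by omega⟩, rfl⟩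
  have hgap_first := h.descentGap (show first ≤ k by omega)
  have hgap_last := h.descentGap (show k ≤ last by omega)
  obtain ⟨h₀, -, h₂, -⟩ := hS first
  obtain ⟨-, h₁, -, h₃⟩ := hS last
  simp only [spread, DescentGap] at h₀ h₁ h₂ h₃ hgap_first hgap_last
  constructor <;> omega

theorem isSpacedConfig_spread_one_and_isSpacedPoint_two_mul_iff (ha : 1 ≤ a)
    (hL : Function.Injective L) (hL₀ : ∀ k, L k ≠ 0) (hM : M = m + n) :
    (IsSpacedConfig M 0 0 a L (spread 1 z) ∧
        ∀ k, IsSpacedPoint M 0 a (L k) (2 * spread 1 z k)) ↔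
      IsSpacedConfig m 1 1 (a - 1) L z ∧ ∀ k, IsSpacedPoint m 1 (a - 1) (L k) (2 * z k + 1) := by
  constructor
  · rintro ⟨h, hS⟩
    have hpt := h.isSpacedPoint_two_mul_add_one hM hS
    have hadd (k l : Fin n) (hkl : k < l) :
        (L k + L l < 0 → a ≤ z k + z l + 1) ∧ (0 < L k + L l → z k + z l + 1 + a ≤ 2 * m + 1) := by
      obtain ⟨hle, hdesc⟩ := h.descentGap hkl.le
      obtain ⟨hk₀, -, hk₂, hk₃⟩ := hpt k
      obtain ⟨-, hl₁, hl₂, hl₃⟩ := hpt l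
      dsimp only at hle hdesc
      omega
    refine ⟨.of_descentGap ha hL (fun k => ?_) (fun k l hkl => h.descentGap hkl)
      (fun k l hkl => (hadd k l hkl).1) (fun k l hkl => (hadd k l hkl).2), hpt⟩
    have := hL₀ k
    obtain ⟨h₀, h₁, h₂, h₃⟩ := hpt k
    constructor <;> omega
  · rintro ⟨h, hS⟩
    refine ⟨isSpacedConfig_spread zero_le_one zero_le_one le_rfl (by omega) h, fun k => ?_⟩
    obtain ⟨h₀, h₁, h₂, h₃⟩ := hS k
    constructor <;> simp only [spread] <;> omega

theorem isSpacedPoint_two_mul_spread_one_iff (ha : 1 ≤ a) (hae : Even a) (hM : M = m + n)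
    (h : IsSpacedConfig m 0 1 (a - 1) L z) (hS : ∀ k, IsSpacedPoint m 1 (a - 1) (L k) (z k)) :
    (∀ k, IsSpacedPoint M 0 a (L k) (2 * spread 1 z k)) ↔
      ∀ k, IsSpacedPoint m 1 (a - 1) (L k) (2 * z k) := by
  have hspread := isSpacedConfig_spread zero_le_one le_rfl zero_le_one
    (show M = m + n - 1 + 1 by omega) h
  constructor
  · intro hM_pt k
    have := k.isLt
    obtain ⟨last, hlast⟩ : ∃ i : Fin n, (i : ℕ) = n - 1 := ⟨⟨n - 1, by omega⟩, rfl⟩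
    have hgap := hspread.descentGap (show k ≤ last by omega)
    have hlt := (hM_pt last).lt_of_pos
    obtain ⟨h₀, -, h₂, -⟩ := hS k
    have := (h.admissible k).le
    have := (h.admissible last).le
    simp only [spread, DescentGap] at hlt hgap
    constructor <;> omega
  · intro hm_pt k
    obtain ⟨h₀, h₁, h₂, h₃⟩ := hm_pt k
    obtain ⟨b, rfl⟩ := hae
    have := (h.admissible k).le
    constructor <;> simp only [spread] <;> omega

end Spread

/-! ### The four counts -/

theorem N_B_eq_ncard_avoidingTuples (n q : ℕ) (u v : ℤ) :
    N_B n q u v = (avoidingTuples n q u v fun x => Avoids x u v).ncard := rfl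

theorem N_C_eq_ncard_avoidingTuples (n q : ℕ) (u v : ℤ) :
    N_C n q u v = (avoidingTuples n q u v fun x => Avoids (2 * x) u v).ncard := rfl

theorem N_BC_eq_ncard_avoidingTuples (n q : ℕ) (u v : ℤ) :
    N_BC n q u v = (avoidingTuples n q u v fun x => Avoids x u v ∧ Avoids (2 * x) u v).ncard := rfl

theorem N_D_eq_ncard_avoidingTuples (n q : ℕ) (u v : ℤ) :
    N_D n q u v = (avoidingTuples n q u v fun _ => True).ncard := by
  simp only [N_D, avoidingTuples, AvoidsSubAdd, implies_true, true_and]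

section Count

variable {n m M a : ℕ}

theorem ncard_avoidingTuples_eq_of_spread {d e : ℤ} (he : e = 0 ∨ e = 1) (ha : 1 ≤ a)
    (haM : a ≤ M) (ham : a ≤ m + 1) {P : ZMod (2 * M + 1) → Prop}
    {P' : ZMod (2 * m + 1) → Prop} {S S' : ℤ → ℤ → Prop}
    (hP : ∀ ε (i : Fin n) z, IsAdmissible M 0 (signedLabel ε i) z →
      (P (signedPoint M 0 ε z) ↔ S (signedLabel ε i) z))
    (hP' : ∀ ε (i : Fin n) z, IsAdmissible m e (signedLabel ε i) z →
      (P' (signedPoint m e ε z) ↔ S' (signedLabel ε i) z))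
    (hspread : ∀ L z : Fin n → ℤ, Function.Injective L → (∀ k, L k ≠ 0) →
      ((IsSpacedConfig M 0 0 a L (spread d z) ∧ ∀ k, S (L k) (spread d z k)) ↔
        IsSpacedConfig m e 1 (a - 1) L z ∧ ∀ k, S' (L k) (z k))) :
    (avoidingTuples n (2 * M + 1) 0 a P).ncard =
      (avoidingTuples n (2 * m + 1) 1 (a - 1) P').ncard := by
  rw [ncard_avoidingTuples (.inl rfl) (.inl rfl) (by omega) (by omega) hP,
    ncard_avoidingTuples he (.inr rfl) (by omega) (by omega) hP',
    ← SignedArrangement.ncard_setOf_spread d fun L z =>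
      IsSpacedConfig M 0 0 a L z ∧ ∀ k, S (L k) (z k)]
  simp only [fun t : SignedArrangement n => hspread t.label t.pos t.label_injective t.label_ne_zero]

theorem N_B_add (ha : 1 ≤ a) (ham : a ≤ m) :
    N_B n (2 * (m + n) + 1) 0 a = N_B n (2 * m + 1) 1 (a - 1) := by
  simp only [N_B_eq_ncard_avoidingTuples]
  refine ncard_avoidingTuples_eq_of_spread (e := 0) (d := 1)
    (S := IsSpacedPoint ↑(m + n) 0 a) (S' := IsSpacedPoint m 1 (a - 1))
    (.inl rfl) ha (by omega) (by omega)
    (fun _ _ _ => avoids_signedPoint_iff (.inl rfl) (by omega) (by omega) _ _)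
    (fun _ _ _ => avoids_signedPoint_iff (.inr rfl) (by omega) (by omega) _ _) fun L z hL hL₀ => ?_
  exact isSpacedConfig_spread_one_and_isSpacedPoint_iff (by omega) (by omega) hL hL₀
    (Nat.cast_add m n)

theorem N_C_add (ha : 1 ≤ a) (ham : a ≤ m) :
    N_C n (2 * (m + n) + 1) 0 a = N_C n (2 * m + 1) 1 (a - 1) := by
  simp only [N_C_eq_ncard_avoidingTuples]
  refine ncard_avoidingTuples_eq_of_spread (e := 1) (d := 1)
    (S := fun L z => IsSpacedPoint ↑(m + n) 0 a L (2 * z + 0))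
    (S' := fun L z => IsSpacedPoint m 1 (a - 1) L (2 * z + 1)) (.inr rfl) ha (by omega) (by omega)
    (fun _ _ _ => avoids_two_mul_signedPoint_iff (.inl rfl) (.inl rfl) (by omega) (by omega) _ _)
    (fun _ _ _ => avoids_two_mul_signedPoint_iff (.inr rfl) (.inr rfl) (by omega) (by omega) _ _)
    fun L z hL hL₀ => ?_
  simp only [add_zero]
  exact isSpacedConfig_spread_one_and_isSpacedPoint_two_mul_iff (by omega) hL hL₀
    (Nat.cast_add m n)

theorem N_BC_add (ha : 1 ≤ a) (hae : Even a) (ham : a ≤ m) :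
    N_BC n (2 * (m + n) + 1) 0 a = N_BC n (2 * m + 1) 1 (a - 1) := by
  simp only [N_BC_eq_ncard_avoidingTuples]
  refine ncard_avoidingTuples_eq_of_spread (e := 0) (d := 1)
    (S := fun L z => IsSpacedPoint ↑(m + n) 0 a L z ∧ IsSpacedPoint ↑(m + n) 0 a L (2 * z + 0))
    (S' := fun L z => IsSpacedPoint m 1 (a - 1) L z ∧ IsSpacedPoint m 1 (a - 1) L (2 * z + 0))
    (.inl rfl) ha (by omega) (by omega)
    (fun _ _ _ hz => and_congr
      (avoids_signedPoint_iff (.inl rfl) (by omega) (by omega) _ _ hz)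
      (avoids_two_mul_signedPoint_iff (.inl rfl) (.inl rfl) (by omega) (by omega) _ _ hz))
    (fun _ _ _ hz => and_congr
      (avoids_signedPoint_iff (.inr rfl) (by omega) (by omega) _ _ hz)
      (avoids_two_mul_signedPoint_iff (.inl rfl) (.inr rfl) (by omega) (by omega) _ _ hz))
    fun L z hL hL₀ => ?_
  simp only [forall_and, ← and_assoc, add_zero]
  rw [isSpacedConfig_spread_one_and_isSpacedPoint_iff (m := m) (by omega) (by omega) hL hL₀
    (Nat.cast_add m n)]
  exact and_congr_right fun ⟨h, hS⟩ =>
    isSpacedPoint_two_mul_spread_one_iff (by omega) (by exact_mod_cast hae) (Nat.cast_add m n) h hS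

theorem N_D_add (hn : 1 ≤ n) (ha : 1 ≤ a) (ham : a ≤ m) :
    N_D n (2 * (m + (n - 1)) + 1) 0 a = N_D n (2 * m + 1) 1 (a - 1) := by
  simp only [N_D_eq_ncard_avoidingTuples]
  refine ncard_avoidingTuples_eq_of_spread (e := 0) (d := 0) (S := fun _ _ => True)
    (S' := fun _ _ => True) (.inl rfl) ha (by omega) (by omega) (fun _ _ _ _ => Iff.rfl)
    (fun _ _ _ _ => Iff.rfl) fun L z hL _ => ?_
  simpa only [implies_true, and_true] using
    isSpacedConfig_spread_zero_iff (by omega) hL (by push_cast [hn]; ring)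

end Count

theorem statement10_general {n a q : ℕ} (hn : 1 ≤ n) (ha : 1 ≤ a) (hq : Odd q)
    (hqa : 2 * (n + a) ≤ q) :
    (N_B n q 0 (a : ℤ) = N_B n (q - 2 * n) 1 ((a : ℤ) - 1)) ∧
    (N_D n q 0 (a : ℤ) = N_D n (q - (2 * n - 2)) 1 ((a : ℤ) - 1)) ∧
    (N_C n q 0 (a : ℤ) = N_C n (q - 2 * n) 1 ((a : ℤ) - 1)) ∧
    (Even a → N_BC n q 0 (a : ℤ) = N_BC n (q - 2 * n) 1 ((a : ℤ) - 1)) := by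
  obtain ⟨r, rfl⟩ := hq
  obtain ⟨m, rfl⟩ : ∃ m, r = m + n := ⟨r - n, by omega⟩
  have hqn : 2 * (m + n) + 1 - 2 * n = 2 * m + 1 := by omega
  have hqn' : 2 * (m + n) + 1 - (2 * n - 2) = 2 * (m + 1) + 1 := by omega
  have hD := N_D_add (m := m + 1) hn ha (by omega)
  rw [show m + 1 + (n - 1) = m + n by omega] at hD
  rw [hqn, hqn']
  have ham : a ≤ m := by omega
  exact ⟨N_B_add ha ham, hD, N_C_add ha ham, fun hae => N_BC_add ha hae ham⟩

/-- Proposition 4.6. For large odd `q`: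
`N_B(n,q,0,a) = N_B(n,q-2n,1,a-1)`; `N_D(n,q,0,a) = N_D(n,q-(2n-2),1,a-1)`;
and for even `a`, the same shift by `2n` for `N_C` and `N_BC`. -/
theorem statement10 (n : ℕ) (hn : 2 ≤ n) (a : ℕ) (ha : 1 ≤ a) :
    ∃ N : ℕ, ∀ q : ℕ, Odd q → N < q →
      (N_B n q 0 (a : ℤ) = N_B n (q - 2 * n) 1 ((a : ℤ) - 1)) ∧
      (N_D n q 0 (a : ℤ) = N_D n (q - (2 * n - 2)) 1 ((a : ℤ) - 1)) ∧
      (Even a → N_C n q 0 (a : ℤ) = N_C n (q - 2 * n) 1 ((a : ℤ) - 1)) ∧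
      (Even a → N_BC n q 0 (a : ℤ) = N_BC n (q - 2 * n) 1 ((a : ℤ) - 1)) :=
  ⟨2 * (n + a), fun _ hq hlt =>
    have ⟨hB, hD, hC, hBC⟩ := statement10_general (by omega) ha hq hlt.le
    ⟨hB, hD, fun _ => hC, hBC⟩⟩
end

section
/- Let n \ge 2 be an integer and let a \ge 1 be an odd integer. Then: (i) there exists an integer N such that for every odd integer q > N, N_C(n,q,0,a) = N_C(n,q-2n,1,a-1); (ii) if P and Q are polynomials in \mathbb{Q}[X] such that P(q) = N_{BC}(n,q,0,a) for all sufficiently large odd integers q and Q(q) = N_{BC}(n,q,1,a-1) for all sufficiently large odd integers q, then P(X) = Q(X - (2n+1)) as polynomials. -/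
open Polynomial

/-!
Lift a tuple `x` over `ZMod q` to integers and give `x i` the label `i - n`, and `-x i` the opposite
label. The tuple satisfies the conditions of type `C` for the interval `[1 - c, a + c - 1]` if and
only if the points `± x i` and their translates by multiples of `q`, read from left to right, form a
chain in which consecutive points are at distance at least `c`, and at least `c + a` at a descent of
the labels. The possible orders of the points in half a period are the signed permutations, so the
count splits into a sum over them. For type `BC`, the point `0` with label `0` joins the chain.

Reflecting half a period exchanges its two ends and preserves the descents. Shortening every gap by
`1` at the same time, the period drops by `2 * n` and `c + 1` becomes `c`, which gives (i).

For (ii), the chains of a given signed permutation are counted by a binomial polynomial in the floor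
of `(q - c) / 2 - n * c` minus a multiple of `a / 2` coming from the descents. The parity
of `q + c` enters only through the rounding, and the difference of the two resulting polynomials is
a signed sum of translates, by multiples of `a`, of one polynomial. If such a sum vanishes for one
`a ≠ 0`, it vanishes for all `a`; and for `a = 1` and `c = 0`, the forbidden interval is empty and
the count is `q ^ n` for both parities. Hence `N_BC` is, for all `c` and all large `q`, one
polynomial in `q - (2 * n + 1) * c`.
-/

section Gap

variable {a c : ℕ} {q : ℤ} {P Q R : ℤ × ℤ}

/-- A pair `(x, l)` is the point `x` of the line with label `l`. The relation `Gap a c P Q` says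
that `Q` is to the right of `P` at distance at least `c`, and at least `c + a` when the label drops.
For labels `P.2 < Q.2`, the difference `P.1 - Q.1` is outside the interval `[1 - c, a + c - 1]` if
and only if `P` and `Q` are comparable for this relation. -/
def Gap (a c : ℕ) (P Q : ℤ × ℤ) : Prop :=
  P.1 + c + (if Q.2 < P.2 then (a : ℤ) else 0) ≤ Q.1

theorem Gap.trans (h₁ : Gap a c P Q) (h₂ : Gap a c Q R) : Gap a c P R := by
  unfold Gap at *
  split_ifs at * <;> omega

instance : IsTrans (ℤ × ℤ) (Gap a c) := ⟨fun _ _ _ => Gap.trans⟩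

theorem Gap.neg (h : Gap a c P Q) : Gap a c (-Q) (-P) := by
  simp only [Gap, Prod.fst_neg, Prod.snd_neg, neg_lt_neg_iff] at *
  omega

theorem Gap.translate (h : Gap a c P Q) (s : ℤ) : Gap a c (P + (s, 0)) (Q + (s, 0)) := by
  simp only [Gap, Prod.fst_add, Prod.snd_add, add_zero] at *
  omega

theorem Gap.add_right_of_nonneg (h : Gap a c P Q) {s : ℤ} (hs : 0 ≤ s) :
    Gap a c P (Q + (s, 0)) := by
  simp only [Gap, Prod.fst_add, Prod.snd_add, add_zero] at *
  omega

theorem Gap.toLex_le (ha : 0 < a) (h : Gap a c P Q) : toLex P ≤ toLex Q := by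
  rw [Prod.Lex.toLex_le_toLex]
  unfold Gap at h
  split_ifs at h <;> omega

/-- The points `P` and `Q` are comparable for `Gap a c` after every translation of `P` by a multiple
of the period `q`. -/
def Linked (a c : ℕ) (q : ℤ) (P Q : ℤ × ℤ) : Prop :=
  ∀ t : ℤ, Relation.SymmGen (Gap a c) (P + (t * q, 0)) Q

theorem Linked.neg (h : Linked a c q P Q) : Linked a c q (-P) (-Q) := by
  intro t
  have hP : -P + (t * q, 0) = -(P + (-t * q, 0)) := by ext <;> simp [add_comm]
  rw [hP]
  exact (h (-t)).symm.imp Gap.neg Gap.neg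

theorem Linked.symm (h : Linked a c q P Q) : Linked a c q Q P := by
  intro t
  have hP : P = P + (-t * q, 0) + (t * q, 0) := by ext <;> simp
  rw [hP]
  exact (h (-t)).symm.imp (·.translate _) (·.translate _)

theorem Linked.gap_of_toLex_lt (ha : 0 < a) (h : Linked a c q P Q) (hlt : toLex P < toLex Q) :
    Gap a c P Q := by
  have hPQ : Relation.SymmGen (Gap a c) P Q := by
    simpa only [zero_mul, Prod.mk_zero_zero, add_zero] using h 0
  exact hPQ.resolve_right fun hQP => (hQP.toLex_le ha).not_gt hlt

theorem Linked.add_period (h : Linked a c q P Q) : Linked a c q P (Q + (q, 0)) := by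
  intro t
  have hP : P + (t * q, 0) = P + ((t - 1) * q, 0) + (q, 0) := by ext <;> simp; ring
  rw [hP]
  exact (h (t - 1)).imp (·.translate _) (·.translate _)

theorem linked_of_gap (hq : 0 ≤ q) (h : Gap a c P Q) (hQP : Gap a c Q (P + (q, 0))) :
    Linked a c q P Q := by
  intro t
  rcases le_or_gt t 0 with ht | ht
  · have hQ : Q = Q + (-t * q, 0) + (t * q, 0) := by ext <;> simp
    rw [hQ]
    exact Or.inl ((h.add_right_of_nonneg (by nlinarith)).translate _)
  · have hP : P + (t * q, 0) = P + (q, 0) + ((t - 1) * q, 0) := by ext <;> simp; ring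
    rw [hP]
    exact Or.inr (hQP.add_right_of_nonneg (by nlinarith))

theorem avoids_sub_iff_linked {q : ℕ} (hlabel : P.2 < Q.2) :
    Avoids ((P.1 : ZMod q) - (Q.1 : ZMod q)) (1 - c) (a + c - 1) ↔ Linked a c q P Q := by
  have gap_iff (t : ℤ) : Relation.SymmGen (Gap a c) (P + (t * q, 0)) Q ↔
      ¬(1 - c ≤ P.1 - Q.1 + t * q ∧ P.1 - Q.1 + t * q ≤ a + c - 1) := by
    simp only [Relation.SymmGen, Gap, Prod.fst_add, Prod.snd_add, add_zero, hlabel, hlabel.not_gt,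
      if_true, if_false]
    omega
  simp only [Linked, gap_iff]
  constructor
  · intro h t ht
    exact h _ ht.1 ht.2 (by simp)
  · intro h k hk₁ hk₂ hk
    rw [← Int.cast_sub, ZMod.intCast_eq_intCast_iff_dvd_sub] at hk
    obtain ⟨t, ht⟩ := hk
    have hkt : P.1 - Q.1 + t * q = k := by linarith
    exact h t (by rw [hkt]; exact ⟨hk₁, hk₂⟩)

end Gap

section Tuples

variable {ι κ : Type*} {a c n : ℕ}

/-- The points `x i` with the negative labels `-n < ... < -1`. Together with their negatives, they
carry the roots of type `C`: `x i - x j`, `x i + x j` and `2 x i` are the differences of two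
positions, those of the points with the smaller label minus those with the larger one. -/
def labelled (x : Fin n → ℤ) (i : Fin n) : ℤ × ℤ := (x i, i - n)

/-- Any two points among `± V i` are linked, apart from a point and itself. -/
def SignedLinked (a c : ℕ) (q : ℤ) (V : ι → ℤ × ℤ) : Prop :=
  (∀ i j, i ≠ j → Linked a c q (V i) (V j)) ∧ ∀ i j, Linked a c q (V i) (-V j)

theorem SignedLinked.comp {q : ℤ} {V : ι → ℤ × ℤ} (h : SignedLinked a c q V) {f : κ → ι}
    (hf : Function.Injective f) : SignedLinked a c q (V ∘ f) :=
  ⟨fun _ _ hij => h.1 _ _ (hf.ne hij), fun _ _ => h.2 _ _⟩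

theorem SignedLinked.units_smul {q : ℤ} {V : ι → ℤ × ℤ} (h : SignedLinked a c q V)
    (ε : ι → ℤˣ) : SignedLinked a c q (fun i => ε i • V i) := by
  obtain ⟨hsub, hadd⟩ := h
  constructor
  · intro i j hij
    have hneg := (hadd i j).neg
    rw [neg_neg] at hneg
    obtain hi | hi := Int.units_eq_one_or (ε i) <;> obtain hj | hj := Int.units_eq_one_or (ε j) <;>
      simp only [hi, hj, one_smul, Units.neg_smul]
    exacts [hsub i j hij, hadd i j, hneg, (hsub i j hij).neg]
  · intro i j
    have hneg := (hadd i j).neg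
    rw [neg_neg] at hneg
    obtain hi | hi := Int.units_eq_one_or (ε i) <;> obtain hj | hj := Int.units_eq_one_or (ε j) <;>
      simp only [hi, hj, one_smul, Units.neg_smul, neg_neg]
    · exact hadd i j
    · exact hsub i j (by rintro rfl; simp [hi] at hj)
    · exact (hsub i j (by rintro rfl; simp [hi] at hj)).neg
    · exact hneg

/-- The tuples counted by `N_C` for the interval `[1 - c, a + c - 1]`. -/
def validC (n q a c : ℕ) : Set (Fin n → ZMod q) :=
  {x | (∀ i, Avoids (2 * x i) (1 - c) (a + c - 1)) ∧ ∀ i j : Fin n, i < j →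
    Avoids (x i - x j) (1 - c) (a + c - 1) ∧ Avoids (x i + x j) (1 - c) (a + c - 1)}

theorem intCast_mem_validC_iff {q : ℕ} {x : Fin n → ℤ} :
    (fun i => (x i : ZMod q)) ∈ validC n q a c ↔ SignedLinked a c q (labelled x) := by
  have avoids_sub {i j : Fin n} (hij : i < j) :
      Avoids ((x i : ZMod q) - (x j : ZMod q)) (1 - c) (a + c - 1) ↔
        Linked a c q (labelled x i) (labelled x j) :=
    avoids_sub_iff_linked (P := labelled x i) (Q := labelled x j) (by simpa [labelled] using hij)
  have avoids_add (i j : Fin n) : Avoids ((x i : ZMod q) + (x j : ZMod q)) (1 - c) (a + c - 1) ↔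
      Linked a c q (labelled x i) (-labelled x j) := by
    rw [← avoids_sub_iff_linked (by simp only [labelled, Prod.snd_neg]; omega)]
    simp [labelled]
  have linked_neg_comm (i j : Fin n) (h : Linked a c q (labelled x i) (-labelled x j)) :
      Linked a c q (labelled x j) (-labelled x i) := by simpa using h.symm.neg
  simp only [validC, Set.mem_ofPred_eq, two_mul, avoids_add]
  constructor
  · rintro ⟨hdiag, hoff⟩
    constructor
    · intro i j hij
      rcases hij.lt_or_gt with hlt | hlt
      · exact (avoids_sub hlt).1 (hoff i j hlt).1
      · exact ((avoids_sub hlt).1 (hoff j i hlt).1).symm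
    · intro i j
      rcases lt_trichotomy i j with hlt | rfl | hlt
      · exact (hoff i j hlt).2
      · exact hdiag i
      · exact linked_neg_comm j i (hoff j i hlt).2
  · rintro ⟨hsub, hadd⟩
    exact ⟨fun i => hadd i i, fun i j hlt => ⟨(avoids_sub hlt).2 (hsub i j hlt.ne), hadd i j⟩⟩

end Tuples

section Spaced

variable {a c m : ℕ} {q : ℤ} {V : Fin (m + 1) → ℤ × ℤ}

/-- The points `-V m, ..., -V 0, V 0, ..., V m, q - V m` form a chain for `Gap a c`. The symmetry
of this sequence makes it enough to look at `-V 0, V 0, ..., V m, q - V m`. -/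
def IsSpaced (a c : ℕ) (q : ℤ) (V : Fin (m + 1) → ℤ × ℤ) : Prop :=
  Gap a c (-V 0) (V 0) ∧ (∀ k : Fin m, Gap a c (V k.castSucc) (V k.succ)) ∧
    Gap a c (V (Fin.last m)) (-V (Fin.last m) + (q, 0))

namespace IsSpaced

variable (h : IsSpaced a c q V)
include h

theorem gap_of_lt {k l : Fin (m + 1)} (hkl : k < l) : Gap a c (V k) (V l) :=
  (Fin.liftFun_iff_succ (Gap a c)).2 h.2.1 hkl

theorem gap_zero_trans {P : ℤ × ℤ} (hP : Gap a c P (V 0)) (k : Fin (m + 1)) : Gap a c P (V k) := by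
  rcases (Fin.zero_le k).eq_or_lt with rfl | hk
  exacts [hP, hP.trans (h.gap_of_lt hk)]

theorem gap_last_trans {P : ℤ × ℤ} (hP : Gap a c (V (Fin.last m)) P) (k : Fin (m + 1)) :
    Gap a c (V k) P := by
  rcases (Fin.le_last k).eq_or_lt with rfl | hk
  exacts [hP, (h.gap_of_lt hk).trans hP]

theorem neg_gap (k l : Fin (m + 1)) : Gap a c (-V k) (V l) := by
  have hk : Gap a c (-V k) (V 0) := by
    simpa using (h.gap_zero_trans h.1 k).neg
  exact h.gap_zero_trans hk l

theorem gap_neg_add (k l : Fin (m + 1)) : Gap a c (V k) (-V l + (q, 0)) := by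
  have hneg : Gap a c (V (Fin.last m)) (-V l + (q, 0)) := by
    have := (h.gap_last_trans h.2.2 l).neg.translate q
    convert this using 1
    ext <;> simp
  exact h.gap_last_trans hneg k

theorem signedLinked (hq : 0 ≤ q) : SignedLinked a c q V := by
  have linked_of_lt {k l : Fin (m + 1)} (hkl : k < l) : Linked a c q (V k) (V l) :=
    linked_of_gap hq (h.gap_of_lt hkl)
      ((h.gap_neg_add l k).trans ((h.neg_gap k k).translate q))
  constructor
  · intro k l hkl
    rcases hkl.lt_or_gt with hlt | hlt
    exacts [linked_of_lt hlt, (linked_of_lt hlt).symm]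
  · exact fun k l => (linked_of_gap hq (h.neg_gap l k) (h.gap_neg_add k l)).symm

theorem linked_zero (hq : 0 ≤ q) (hzero : Gap a c 0 (V 0)) (k : Fin (m + 1)) :
    Linked a c q (V k) 0 := by
  have hk := h.gap_zero_trans hzero k
  have hneg : Gap a c (-V k) 0 := by simpa using hk.neg
  exact (linked_of_gap hq hk ((h.gap_neg_add k k).trans (hneg.translate q))).symm

end IsSpaced

end Spaced

section SignedPerm

variable {a c m n : ℕ}

/-- A pair `(σ, ε)`, standing for the arrangement in which the `k`-th place is taken by the
coordinate of index `σ k`, multiplied by the sign `ε k`. -/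
abbrev SignedPerm (n : ℕ) := Equiv.Perm (Fin n) × (Fin n → ℤˣ)

namespace SignedPerm

/-- The signed label at the `k`-th place, where the coordinate of index `i` has label `i - n`. -/
def word (t : SignedPerm n) (k : Fin n) : ℤ := t.2 k * (t.1 k - n)

/-- The arrangement `t` placed at the positions `p`. -/
def points (t : SignedPerm n) (p : Fin n → ℤ) (k : Fin n) : ℤ × ℤ := (p k, t.word k)

/-- The tuple whose coordinates, arranged according to `t`, are at the positions `p`. -/
def tuple (t : SignedPerm n) (p : Fin n → ℤ) (i : Fin n) : ℤ := t.2 (t.1.symm i) * p (t.1.symm i)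

theorem word_neg_iff {t : SignedPerm n} {k : Fin n} : t.word k < 0 ↔ t.2 k = 1 := by
  obtain h | h := Int.units_eq_one_or (t.2 k) <;> simp [word, h]

theorem word_pos_iff {t : SignedPerm n} {k : Fin n} : 0 < t.word k ↔ t.2 k = -1 := by
  obtain h | h := Int.units_eq_one_or (t.2 k) <;> simp [word, h]

theorem tuple_apply (t : SignedPerm n) (p : Fin n → ℤ) (k : Fin n) :
    t.tuple p (t.1 k) = t.2 k * p k := by
  simp [tuple]

theorem labelled_tuple (t : SignedPerm n) (p : Fin n → ℤ) (i : Fin n) :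
    labelled (t.tuple p) i = t.2 (t.1.symm i) • t.points p (t.1.symm i) := by
  obtain h | h := Int.units_eq_one_or (t.2 (t.1.symm i)) <;>
    simp [labelled, tuple, points, word, h]

end SignedPerm

/-- `1` for positive integers, and `-1` otherwise. -/
def signUnit (y : ℤ) : ℤˣ := if 0 < y then 1 else -1

/-- The member with nonnegative position of each pair `± labelled x i`; when this position is `0`,
the one with the positive label. -/
def folded (x : Fin n → ℤ) (i : Fin n) : ℤ × ℤ := signUnit (x i) • labelled x i

theorem folded_injective (x : Fin n → ℤ) : Function.Injective (folded x) := by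
  intro i j hij
  have hlabel := congrArg Prod.snd hij
  simp only [folded, signUnit, labelled] at hlabel
  split_ifs at hlabel <;>
    simp only [one_smul, Units.neg_smul, Prod.smul_mk] at hlabel <;> omega

theorem folded_pos (x : Fin n → ℤ) (i : Fin n) : 0 < toLex (folded x i) := by
  rw [← toLex_zero, Prod.Lex.toLex_lt_toLex]
  simp only [folded, signUnit, labelled]
  split_ifs <;> simp only [one_smul, Units.neg_smul, Prod.smul_mk, Prod.fst_zero, Prod.snd_zero] <;>
    omega

theorem folded_lt_neg_add {q : ℤ} {x : Fin n → ℤ} {i : Fin n} (hx : x i * 2 ∈ Set.Ioc (-q) q) :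
    toLex (folded x i) < toLex (-folded x i + (q, 0)) := by
  obtain ⟨hlow, hhigh⟩ := hx
  simp only [Prod.Lex.toLex_lt_toLex, folded, signUnit, labelled]
  split_ifs <;> simp only [one_smul, Units.neg_smul, Prod.smul_mk, Prod.neg_mk, Prod.mk_add_mk] <;>
    omega

theorem exists_isSpaced {q : ℤ} {x : Fin (m + 1) → ℤ} (ha : 0 < a)
    (hx : ∀ i, x i * 2 ∈ Set.Ioc (-q) q) (hlinked : SignedLinked a c q (labelled x)) :
    ∃ (t : SignedPerm (m + 1)) (p : Fin (m + 1) → ℤ),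
      IsSpaced a c q (t.points p) ∧ t.tuple p = x := by
  obtain ⟨hsub, hadd⟩ : SignedLinked a c q (folded x) := hlinked.units_smul _
  set σ := Tuple.sort (toLex ∘ folded x)
  have hσ : StrictMono ((toLex ∘ folded x) ∘ σ) :=
    (Tuple.monotone_sort _).strictMono_of_injective
      ((toLex.injective.comp (folded_injective x)).comp σ.injective)
  let t : SignedPerm (m + 1) := (σ, fun k => signUnit (x (σ k)))
  let p : Fin (m + 1) → ℤ := fun k => (folded x (σ k)).1
  have hpoints : t.points p = folded x ∘ σ := by
    ext k <;> simp [t, p, SignedPerm.points, SignedPerm.word, folded, labelled, Units.smul_def]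
  refine ⟨t, p, ?_, ?_⟩
  · rw [hpoints]
    exact ⟨(hadd _ _).symm.gap_of_toLex_lt ha (neg_lt_self (folded_pos x _)),
      fun k => (hsub _ _ (σ.injective.ne k.castSucc_lt_succ.ne)).gap_of_toLex_lt ha
        (hσ k.castSucc_lt_succ),
      (hadd _ _).add_period.gap_of_toLex_lt ha (folded_lt_neg_add (hx _))⟩
  · ext i
    obtain h | h := Int.units_eq_one_or (signUnit (x i)) <;>
      simp [SignedPerm.tuple, t, p, folded, labelled, h]

namespace IsSpaced

variable {q : ℤ} {t t' : SignedPerm (m + 1)} {p p' : Fin (m + 1) → ℤ}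

theorem signedLinked_tuple (hq : 0 ≤ q) (h : IsSpaced a c q (t.points p)) :
    SignedLinked a c q (labelled (t.tuple p)) := by
  rw [funext (t.labelled_tuple p)]
  exact ((h.signedLinked hq).comp t.1.symm.injective).units_smul (t.2 ∘ t.1.symm)

theorem tuple_mem_Ioc_and_sign (ha : 0 < a) (h : IsSpaced a c q (t.points p)) (k : Fin (m + 1)) :
    t.tuple p (t.1 k) * 2 ∈ Set.Ioc (-q) q ∧ signUnit (t.tuple p (t.1 k)) = t.2 k := by
  have hneg := h.neg_gap k k
  have hadd := h.gap_neg_add k k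
  rw [t.tuple_apply]
  simp only [Gap, SignedPerm.points, Prod.fst_neg, Prod.snd_neg, Prod.fst_add, Prod.snd_add,
    add_zero, lt_neg_self_iff, neg_lt_self_iff, SignedPerm.word_neg_iff,
    SignedPerm.word_pos_iff] at hneg hadd
  obtain hk | hk := Int.units_eq_one_or (t.2 k) <;>
    simp only [hk, signUnit, units_ne_neg_self, neg_units_ne_self, if_true, if_false,
      ite_eq_left_iff, ite_eq_right_iff, imp_false, Units.val_one, Units.val_neg, Set.mem_Ioc]
      at hneg hadd ⊢ <;>
    omega

theorem tuple_mul_two_mem_Ioc (ha : 0 < a) (h : IsSpaced a c q (t.points p)) (i : Fin (m + 1)) :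
    t.tuple p i * 2 ∈ Set.Ioc (-q) q := by
  simpa only [Equiv.apply_symm_apply] using (h.tuple_mem_Ioc_and_sign ha (t.1.symm i)).1

theorem points_eq_folded (ha : 0 < a) (h : IsSpaced a c q (t.points p)) :
    t.points p = folded (t.tuple p) ∘ t.1 := by
  ext1 k
  rw [Function.comp_apply, folded, (h.tuple_mem_Ioc_and_sign ha k).2, t.labelled_tuple,
    Equiv.symm_apply_apply, smul_smul, Int.units_mul_self, one_smul]

theorem eq_of_tuple_eq (ha : 0 < a) (h : IsSpaced a c q (t.points p))
    (h' : IsSpaced a c q (t'.points p')) (htuple : t.tuple p = t'.tuple p') : t = t' ∧ p = p' := by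
  have monotone {t : SignedPerm (m + 1)} {p : Fin (m + 1) → ℤ} (h : IsSpaced a c q (t.points p)) :
      Monotone ((toLex ∘ folded (t.tuple p)) ∘ t.1) := by
    rw [Function.comp_assoc, ← h.points_eq_folded ha]
    exact Fin.monotone_iff_le_succ.2 fun k => (h.2.1 k).toLex_le ha
  have hfolded := Tuple.unique_monotone (monotone h) (htuple ▸ monotone h')
  have hσ : t.1 = t'.1 := by
    ext1 k
    exact (toLex.injective.comp (folded_injective _)) (congrFun hfolded k)
  have hε : t.2 = t'.2 := by
    ext1 k
    rw [← (h.tuple_mem_Ioc_and_sign ha k).2, ← (h'.tuple_mem_Ioc_and_sign ha k).2, htuple, hσ]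
  obtain rfl : t = t' := Prod.ext hσ hε
  refine ⟨rfl, funext fun k => ?_⟩
  have hpoints : t.points p = t.points p' := by
    rw [h.points_eq_folded ha, h'.points_eq_folded ha, htuple]
  exact congrArg Prod.fst (congrFun hpoints k)

theorem avoids_tuple_iff {q : ℕ} (ha : 0 < a) (h : IsSpaced a c q (t.points p)) :
    (∀ i, Avoids (t.tuple p i : ZMod q) (1 - c) (a + c - 1)) ↔ Gap a c 0 (t.points p 0) := by
  have avoids_iff (i : Fin (m + 1)) : Avoids (t.tuple p i : ZMod q) (1 - c) (a + c - 1) ↔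
      Linked a c q (labelled (t.tuple p) i) 0 := by
    rw [← avoids_sub_iff_linked (by simp only [labelled, Prod.snd_zero]; omega)]
    simp [labelled]
  simp only [avoids_iff]
  constructor
  · intro hlinked
    have hzero : Linked a c q (t.points p 0) 0 := by
      have hfirst := hlinked (t.1 0)
      rw [t.labelled_tuple, Equiv.symm_apply_apply] at hfirst
      obtain hε | hε := Int.units_eq_one_or (t.2 0)
      · simpa [hε] using hfirst
      · simpa [hε] using hfirst.neg
    refine hzero.symm.gap_of_toLex_lt ha ?_
    rw [h.points_eq_folded ha]
    exact folded_pos _ _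
  · intro hzero i
    rw [t.labelled_tuple]
    have hlinked := h.linked_zero q.cast_nonneg hzero (t.1.symm i)
    obtain hε | hε := Int.units_eq_one_or (t.2 (t.1.symm i))
    · simpa [hε] using hlinked
    · simpa [hε] using hlinked.neg

end IsSpaced

theorem ncard_inter_validC {q : ℕ} (hq : q ≠ 0) (ha : 0 < a) (S : Set (Fin (m + 1) → ZMod q)) :
    (S ∩ validC (m + 1) q a c).ncard = ∑ t : SignedPerm (m + 1),
      {p | IsSpaced a c q (t.points p) ∧ (fun i => (t.tuple p i : ZMod q)) ∈ S}.ncard := by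
  have : NeZero q := ⟨hq⟩
  let reduce (y : Σ t : SignedPerm (m + 1), {p | IsSpaced a c q (t.points p) ∧
      (fun i => (t.tuple p i : ZMod q)) ∈ S}) : ↥(S ∩ validC (m + 1) q a c) :=
    ⟨fun i => (y.1.tuple y.2 i : ZMod q), y.2.2.2,
      intCast_mem_validC_iff.2 (y.2.2.1.signedLinked_tuple q.cast_nonneg)⟩
  have hinj : Function.Injective reduce := by
    rintro ⟨t, p, hp, hpS⟩ ⟨t', p', hp', hpS'⟩ heq
    have htuple : t.tuple p = t'.tuple p' := by
      ext i
      have hi := congrFun (congrArg Subtype.val heq) i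
      rw [← (ZMod.valMinAbs_spec _ _).2 ⟨rfl, hp.tuple_mul_two_mem_Ioc ha i⟩,
        ← (ZMod.valMinAbs_spec _ _).2 ⟨rfl, hp'.tuple_mul_two_mem_Ioc ha i⟩]
      exact congrArg ZMod.valMinAbs hi
    obtain ⟨rfl, rfl⟩ := hp.eq_of_tuple_eq ha hp' htuple
    rfl
  have hsurj : Function.Surjective reduce := by
    rintro ⟨x, hxS, hxC⟩
    have hcast : (fun i => ((x i).valMinAbs : ZMod q)) = x := by simp
    rw [← hcast, intCast_mem_validC_iff] at hxC
    obtain ⟨t, p, hp, htuple⟩ := exists_isSpaced ha (fun i => (x i).valMinAbs_mem_Ioc) hxC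
    exact ⟨⟨t, p, hp, by rwa [htuple, hcast]⟩, Subtype.ext (by simp only [reduce, htuple, hcast])⟩
  have finite_fibre (t : SignedPerm (m + 1)) : Finite {p | IsSpaced a c q (t.points p) ∧
      (fun i => (t.tuple p i : ZMod q)) ∈ S} :=
    .of_injective (fun p => reduce ⟨t, p⟩) (hinj.comp sigma_mk_injective)
  simp only [← Nat.card_coe_set_eq]
  rw [← Nat.card_congr (.ofBijective reduce ⟨hinj, hsurj⟩), Nat.card_sigma]

end SignedPerm

section Reflection

variable {a c m n : ℕ}

/-- The arrangement `t` read backwards, with opposite signs. -/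
def SignedPerm.reverse : Equiv.Perm (SignedPerm n) :=
  (Equiv.mulRight Fin.revPerm).prodCongr (Fin.revPerm.arrowCongr (Equiv.neg ℤˣ))

/-- The reflection `x ↦ r - x` of the positions, followed by a contraction that shortens the gap
between two consecutive points by `1`. -/
def reflectPos (r : ℤ) : (Fin n → ℤ) ≃ (Fin n → ℤ) :=
  (Fin.revPerm.arrowCongr (.refl ℤ)).trans (.subLeft fun k => r - k)

theorem SignedPerm.points_reverse (t : SignedPerm n) (r : ℤ) (p : Fin n → ℤ) (k : Fin n) :
    (reverse t).points (reflectPos r p) k = -t.points p k.rev + (r - k, 0) := by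
  ext
  · simp only [points, reflectPos, Equiv.trans_apply, Equiv.subLeft_apply, Equiv.arrowCongr_apply,
      Equiv.coe_refl, Fin.revPerm_symm, Fin.revPerm_apply, Function.comp_apply, Pi.sub_apply, id_eq,
      Prod.fst_add, Prod.fst_neg]
    ring
  · simp [points, word, reverse]

theorem isSpaced_reverse_iff {q r : ℤ} (hr : q + 2 * (m + 1) = 2 * r + 1)
    {t : SignedPerm (m + 1)} {p : Fin (m + 1) → ℤ} :
    IsSpaced a c q ((SignedPerm.reverse t).points (reflectPos r p)) ↔
      IsSpaced a (c + 1) (q + 2 * (m + 1)) (t.points p) := by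
  have hpoints := t.points_reverse r p
  set V := t.points p
  set V' := (SignedPerm.reverse t).points (reflectPos r p)
  have hfirst : Gap a c (-V' 0) (V' 0) ↔
      Gap a (c + 1) (V (Fin.last m)) (-V (Fin.last m) + (q + 2 * (m + 1), 0)) := by
    simp only [hpoints, Gap, Fin.rev_zero, Fin.val_zero, Prod.fst_add, Prod.fst_neg, Prod.snd_add,
      Prod.snd_neg, add_zero, neg_neg]
    omega
  have hchain : (∀ k : Fin m, Gap a c (V' k.castSucc) (V' k.succ)) ↔
      ∀ k : Fin m, Gap a (c + 1) (V k.castSucc) (V k.succ) := by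
    refine Fin.revPerm.forall_congr fun k => ?_
    simp only [hpoints, Gap, Fin.revPerm_apply, Fin.rev_castSucc, Fin.rev_succ, Fin.val_castSucc,
      Fin.val_succ, Prod.fst_add, Prod.fst_neg, Prod.snd_add, Prod.snd_neg, add_zero,
      neg_lt_neg_iff]
    omega
  have hlast : Gap a c (V' (Fin.last m)) (-V' (Fin.last m) + (q, 0)) ↔
      Gap a (c + 1) (-V 0) (V 0) := by
    simp only [hpoints, Gap, Fin.rev_last, Fin.val_last, Prod.fst_add, Prod.fst_neg, Prod.snd_add,
      Prod.snd_neg, add_zero, neg_neg]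
    omega
  rw [IsSpaced, IsSpaced, hfirst, hchain, hlast]
  tauto

theorem ncard_validC_succ {q : ℕ} (hq : Odd q) (ha : 0 < a) :
    (validC (m + 1) (q + 2 * (m + 1)) a (c + 1)).ncard = (validC (m + 1) q a c).ncard := by
  obtain ⟨s, hs⟩ := hq
  have hr : (q : ℤ) + 2 * (m + 1) = 2 * (s + m + 1 : ℤ) + 1 := by rw [hs]; push_cast; ring
  rw [← Set.univ_inter (validC _ (_ + _) _ _), ← Set.univ_inter (validC _ q _ _),
    ncard_inter_validC (by omega) ha, ncard_inter_validC (by omega) ha]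
  refine Fintype.sum_equiv SignedPerm.reverse _ _ fun t => ?_
  simp only [Set.mem_univ, and_true, Nat.cast_add, Nat.cast_mul, Nat.cast_ofNat, Nat.cast_one,
    ← isSpaced_reverse_iff hr]
  exact Set.ncard_preimage_of_injective_subset_range
    (s := {p | IsSpaced a c q ((SignedPerm.reverse t).points p)}) (reflectPos _).injective (by simp)

end Reflection

section Translates

variable {ι K : Type*} [Field K] [CharZero K]

/-- The `k`-th Hasse derivative has degree `f.natDegree - k`, so all degrees up to that of `f` are
reached. -/
theorem mem_span_hasseDeriv {f : K[X]} (hf : f ≠ 0) {g : K[X]} (hg : g.natDegree ≤ f.natDegree) :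
    g ∈ Submodule.span K (Set.range fun k => hasseDeriv k f) := by
  suffices mem_span : ∀ d ≤ f.natDegree + 1, ∀ g : K[X], g.degree < d →
      g ∈ Submodule.span K (Set.range fun k => hasseDeriv k f) from
    mem_span _ le_rfl g (degree_le_natDegree.trans_lt (by exact_mod_cast Nat.lt_succ_of_le hg))
  intro d hd g hg
  induction d generalizing g with
  | zero => simp_all
  | succ d ih =>
    set h := hasseDeriv (f.natDegree - d) f
    have hdeg : h.degree < (d + 1 : ℕ) := by
      have hle : h.natDegree ≤ d := (natDegree_hasseDeriv_le _ _).trans (by omega)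
      exact degree_le_natDegree.trans_lt (by exact_mod_cast Nat.lt_succ_of_le hle)
    have hcoeff : h.coeff d ≠ 0 := by
      have hchoose : (f.natDegree.choose (f.natDegree - d) : K) ≠ 0 :=
        Nat.cast_ne_zero.2 (Nat.choose_pos (Nat.sub_le _ _)).ne'
      rw [hasseDeriv_coeff, Nat.add_sub_cancel' (by omega)]
      exact mul_ne_zero hchoose (leadingCoeff_ne_zero.2 hf)
    set r := g.coeff d / h.coeff d
    have hlower : (g - r • h).degree < d := by
      rw [degree_lt_iff_coeff_zero] at *
      intro k hk
      rcases hk.eq_or_lt with rfl | hlt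
      · simp [r, hcoeff]
      · simp [hg k hlt, hdeg k hlt]
    rw [← sub_add_cancel g (r • h)]
    exact add_mem (ih (by omega) _ hlower)
      (Submodule.smul_mem _ _ (Submodule.subset_span ⟨_, rfl⟩))

/-- The hypothesis says that `g ↦ ∑ i, w i * g.eval (u i)` vanishes on the Hasse derivatives of `f`,
hence on all polynomials of degree at most that of `f`; this is invariant under a rescaling of the
nodes `u i`. -/
theorem sum_smul_taylor_mul_eq_zero [Fintype ι] {w u : ι → K} {f : K[X]}
    (h : ∑ i, w i • taylor (u i) f = 0) (a : K) : ∑ i, w i • taylor (a * u i) f = 0 := by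
  rcases eq_or_ne f 0 with rfl | hf
  · simp
  let φ : K[X] →ₗ[K] K := ∑ i, w i • leval (u i)
  have hφ (g : K[X]) : φ g = ∑ i, w i * g.eval (u i) := by simp [φ]
  have hspan : Submodule.span K (Set.range fun k => hasseDeriv k f) ≤ LinearMap.ker φ := by
    rw [Submodule.span_le]
    rintro _ ⟨k, rfl⟩
    have hk := congrArg (coeff · k) h
    simpa [hφ, finsetSum_coeff, taylor_coeff] using hk
  ext k
  have hdeg : ((hasseDeriv k f).comp (C a * X)).natDegree ≤ f.natDegree :=
    calc ((hasseDeriv k f).comp (C a * X)).natDegree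
      _ ≤ (hasseDeriv k f).natDegree * (C a * X).natDegree := natDegree_comp_le
      _ ≤ f.natDegree * 1 := Nat.mul_le_mul ((natDegree_hasseDeriv_le f k).trans (Nat.sub_le _ _))
          ((natDegree_C_mul_le a X).trans natDegree_X_le)
      _ = f.natDegree := mul_one _
  have hk := LinearMap.mem_ker.1 (hspan (mem_span_hasseDeriv hf hdeg))
  simpa [hφ, finsetSum_coeff, taylor_coeff, eval_comp] using hk

end Translates

section Chains

theorem ncard_strictMono {α : Type*} [LinearOrder α] (S : Set α) (n : ℕ) :
    {s : Fin n → α | StrictMono s ∧ ∀ k, s k ∈ S}.ncard = S.ncard.choose n := by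
  let e : {s : Fin n → α | StrictMono s ∧ ∀ k, s k ∈ S} ≃ (Fin n ↪o S) :=
    { toFun s := OrderEmbedding.ofStrictMono (fun k => ⟨s.1 k, s.2.2 k⟩) s.2.1
      invFun f := ⟨fun k => f k, f.strictMono, fun k => (f k).2⟩ }
  rw [← Nat.card_coe_set_eq, Nat.card_congr (e.trans Set.powersetCard.ofFinEmbEquiv),
    Set.powersetCard.card, Nat.card_coe_set_eq]

theorem forall_mem_Icc_iff_of_monotone {α : Type*} [Preorder α] {m : ℕ} {l h : α}
    {s : Fin (m + 1) → α} (hs : Monotone s) :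
    (∀ k, s k ∈ Set.Icc l h) ↔ l ≤ s 0 ∧ s (Fin.last m) ≤ h :=
  ⟨fun hmem => ⟨(hmem 0).1, (hmem _).2⟩, fun hends k =>
    ⟨hends.1.trans (hs k.zero_le), (hs k.le_last).trans hends.2⟩⟩

theorem ncard_chains {m N : ℕ} {l h : ℤ} {g : Fin m → ℤ} (hN : h - l - ∑ k, g k = N) :
    {p : Fin (m + 1) → ℤ | l ≤ p 0 ∧ (∀ k : Fin m, p k.castSucc + g k ≤ p k.succ) ∧
      p (Fin.last m) ≤ h}.ncard = (N + (m + 1)).choose (m + 1) := by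
  let offset : Fin (m + 1) → ℤ := Fin.partialSum fun k => g k - 1
  have offset_last : offset (Fin.last m) = ∑ k, g k - m := by
    simp [offset, Fin.partialSum, List.take_of_length_le, List.sum_ofFn]
  have hcard : (Set.Icc l (h - offset (Fin.last m))).ncard = N + (m + 1) := by
    rw [Set.ncard_eq_toFinset_card', Set.toFinset_Icc, Int.card_Icc, offset_last]
    omega
  suffices hpreimage : {p : Fin (m + 1) → ℤ | l ≤ p 0 ∧
      (∀ k : Fin m, p k.castSucc + g k ≤ p k.succ) ∧ p (Fin.last m) ≤ h} =
      (· - offset) ⁻¹' {s | StrictMono s ∧ ∀ k, s k ∈ Set.Icc l (h - offset (Fin.last m))} by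
    rw [hpreimage, Set.ncard_preimage_of_injective_subset_range (sub_left_injective)
      (fun s _ => ⟨s + offset, add_sub_cancel_right s offset⟩), ncard_strictMono, hcard]
  ext p
  have hmono : StrictMono (p - offset) ↔ ∀ k : Fin m, p k.castSucc + g k ≤ p k.succ := by
    rw [Fin.strictMono_iff_lt_succ]
    refine forall_congr' fun k => ?_
    simp only [offset, Pi.sub_apply, Fin.partialSum_succ]
    omega
  have hmem (hp : StrictMono (p - offset)) :
      (∀ k, (p - offset) k ∈ Set.Icc l (h - offset (Fin.last m))) ↔
        l ≤ p 0 ∧ p (Fin.last m) ≤ h := by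
    rw [forall_mem_Icc_iff_of_monotone hp.monotone]
    simp [offset]
  change _ ↔ StrictMono (p - offset) ∧ ∀ k, (p - offset) k ∈ Set.Icc l _
  rw [and_congr_right hmem, hmono]
  exact and_left_comm

end Chains

section Counting

variable {a c m n : ℕ}

/-- The number of descents of the sequence of labels `0, t.word 0, ..., t.word m`. -/
def SignedPerm.descents (t : SignedPerm (m + 1)) : ℕ :=
  (if t.word 0 < 0 then 1 else 0) + ∑ k : Fin m, if t.word k.succ < t.word k.castSucc then 1 else 0

/-- `1` if there is a descent between the last point and its mirror image, and `0` otherwise. -/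
def SignedPerm.lastDescent (t : SignedPerm (m + 1)) : ℕ :=
  if 0 < t.word (Fin.last m) then 1 else 0

theorem ncard_isSpaced_pos {q : ℤ} {N : ℕ} (t : SignedPerm (m + 1))
    (hN : (q - c - a * t.lastDescent) / 2 - (m + 1) * c - a * t.descents = N) :
    {p | IsSpaced a c q (t.points p) ∧ Gap a c 0 (t.points p 0)}.ncard =
      (N + (m + 1)).choose (m + 1) := by
  have gap_iff (P Q : ℤ × ℤ) :
      Gap a c P Q ↔ P.1 + (c + a * (if Q.2 < P.2 then 1 else 0)) ≤ Q.1 := by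
    rw [Gap, mul_ite, mul_one, mul_zero, add_assoc]
  have hfirst (p : Fin (m + 1) → ℤ) : Gap a c 0 (t.points p 0) ↔
      c + a * (if t.word 0 < 0 then 1 else 0) ≤ p 0 := by
    rw [gap_iff, Prod.fst_zero, zero_add, Prod.snd_zero, SignedPerm.points]
  have hchain (p : Fin (m + 1) → ℤ) :
      (∀ k : Fin m, Gap a c (t.points p k.castSucc) (t.points p k.succ)) ↔ ∀ k : Fin m,
        p k.castSucc + (c + a * (if t.word k.succ < t.word k.castSucc then 1 else 0)) ≤ p k.succ :=
    forall_congr' fun k => gap_iff _ _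
  have hlast (p : Fin (m + 1) → ℤ) :
      Gap a c (t.points p (Fin.last m)) (-t.points p (Fin.last m) + (q, 0)) ↔
        p (Fin.last m) ≤ (q - c - a * t.lastDescent) / 2 := by
    rw [gap_iff, Int.le_ediv_iff_mul_le two_pos]
    simp only [SignedPerm.points, SignedPerm.lastDescent, Prod.neg_mk, Prod.mk_add_mk, add_zero,
      neg_lt_self_iff, Nat.cast_ite, Nat.cast_one, Nat.cast_zero]
    omega
  rw [← ncard_chains (l := c + a * (if t.word 0 < 0 then 1 else 0))
    (h := (q - c - a * t.lastDescent) / 2)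
    (g := fun k => c + a * (if t.word k.succ < t.word k.castSucc then 1 else 0))]
  · congr 1
    ext p
    rw [Set.mem_ofPred_eq, Set.mem_ofPred_eq, IsSpaced, ← hfirst, ← hlast, ← hchain]
    exact ⟨fun ⟨⟨_, hgaps, hend⟩, hzero⟩ => ⟨hzero, hgaps, hend⟩, fun ⟨hzero, hgaps, hend⟩ =>
      ⟨⟨.trans (by simpa using hzero.neg) hzero, hgaps, hend⟩, hzero⟩⟩
  · rw [← hN, SignedPerm.descents, Finset.sum_add_distrib, ← Finset.mul_sum, Finset.sum_const,
      Finset.card_univ, Fintype.card_fin, nsmul_eq_mul]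
    push_cast
    ring

theorem eventually_N_BC_eq_sum (m c : ℕ) (ha : 0 < a) :
    ∀ᶠ q : ℕ in Filter.atTop, (N_BC (m + 1) q (1 - c) (a + c - 1) : ℚ) =
      ∑ t : SignedPerm (m + 1), (preHilbertPoly ℚ (m + 1) 0).eval
        (((q - c - a * t.lastDescent) / 2 - (m + 1) * c - a * t.descents : ℤ) : ℚ) := by
  have hN (t : SignedPerm (m + 1)) : ∀ᶠ q : ℕ in Filter.atTop,
      0 ≤ ((q : ℤ) - c - a * t.lastDescent) / 2 - (m + 1) * c - a * t.descents := by
    filter_upwards [Filter.eventually_ge_atTop (c + a * t.lastDescent +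
      2 * ((m + 1) * c + a * t.descents))] with q hq
    zify at hq
    omega
  filter_upwards [Filter.eventually_all.2 hN, Filter.eventually_ne_atTop 0] with q hN hq
  have hset : N_BC (m + 1) q (1 - c) (a + c - 1) =
      ({x | ∀ i, Avoids (x i) (1 - c) (a + c - 1)} ∩ validC (m + 1) q a c).ncard := by
    simp only [N_BC, validC, forall_and, and_assoc]
    rfl
  rw [hset, ncard_inter_validC hq ha, Nat.cast_sum]
  refine Finset.sum_congr rfl fun t _ => ?_
  obtain ⟨N, hN⟩ := Int.eq_ofNat_of_zero_le (hN t)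
  have hfibre : {p | IsSpaced a c q (t.points p) ∧ (fun i => (t.tuple p i : ZMod q)) ∈
      {x : Fin (m + 1) → ZMod q | ∀ i, Avoids (x i) (1 - c) (a + c - 1)}} =
      {p | IsSpaced a c q (t.points p) ∧ Gap a c 0 (t.points p 0)} := by
    ext p
    exact and_congr_right fun h => h.avoids_tuple_iff ha
  rw [hfibre, ncard_isSpaced_pos t hN, hN, Int.cast_natCast,
    preHilbertPoly_eq_choose_sub_add ℚ _ N.zero_le, Nat.sub_zero]

end Counting

section Interpolation

theorem eq_of_frequently_eval_eq {R : Type*} [CommRing R] [IsDomain R] {P Q : R[X]} {x : ℕ → R}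
    (hx : Function.Injective x) (h : ∃ᶠ q in Filter.atTop, P.eval (x q) = Q.eval (x q)) :
    P = Q := by
  refine eq_of_infinite_eval_eq P Q
    (((Nat.frequently_atTop_iff_infinite.1 h).image hx.injOn).mono ?_)
  rintro _ ⟨q, hq, rfl⟩
  exact hq

theorem eq_comp_of_odd_eval_eq {R : Type*} [CommRing R] [IsDomain R] [CharZero R] {P Q : R[X]}
    {f : ℕ → R} {s : R} {M : ℕ} (hP : ∀ q : ℕ, Odd q → M < q → P.eval (q : R) = f q)
    (hQ : ∀ᶠ q : ℕ in Filter.atTop, f q = Q.eval (q - s)) : P = Q.comp (X - C s) := by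
  refine eq_of_frequently_eval_eq Nat.cast_injective ((Nat.frequently_odd.and_eventually
    (hQ.and (Filter.eventually_gt_atTop M))).mono fun q ⟨hodd, hfQ, hlt⟩ => ?_)
  rw [hP q hodd hlt, hfQ, eval_comp, eval_sub, eval_X, eval_C]

end Interpolation

section Parity

variable {a m : ℕ}

/-- The polynomial expressing `N_BC` in terms of `(q - c) / 2 - n * c`, for `n = m + 1` and `q + c`
of the parity of `j`; the last summand in the shift is the rounding error of a division by `2`. -/
noncomputable def parityPoly (m a j : ℕ) : ℚ[X] :=
  ∑ t : SignedPerm (m + 1), taylor (-(a * (t.descents + t.lastDescent / 2 : ℚ) +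
    ((j + t.lastDescent) % 2 : ℕ) / 2)) (preHilbertPoly ℚ (m + 1) 0)

theorem eventually_N_BC_eq_eval_parityPoly (m c : ℕ) (ha : Odd a) :
    ∀ᶠ q : ℕ in Filter.atTop, (N_BC (m + 1) q (1 - c) (a + c - 1) : ℚ) =
      (parityPoly m a (q + c)).eval ((q - (2 * (m + 1 : ℕ) + 1) * c) / 2 : ℚ) := by
  filter_upwards [eventually_N_BC_eq_sum m c ha.pos] with q hq
  rw [hq, parityPoly, eval_finsetSum]
  refine Finset.sum_congr rfl fun t _ => ?_
  have hmod : ((q : ℤ) - c - a * t.lastDescent) % 2 = ((q + c + t.lastDescent) % 2 : ℕ) := by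
    obtain ⟨b, rfl⟩ := ha
    have hmul : ((2 * b + 1 : ℕ) : ℤ) * t.lastDescent =
        2 * (b * t.lastDescent) + t.lastDescent := by
      push_cast
      ring
    omega
  have hfloor : ((((q : ℤ) - c - a * t.lastDescent) / 2 : ℤ) : ℚ) =
      (q - c - a * t.lastDescent - ((q + c + t.lastDescent) % 2 : ℕ)) / 2 := by
    have hdiv := Int.mul_ediv_add_emod ((q : ℤ) - c - a * t.lastDescent) 2
    rw [hmod] at hdiv
    have hdivℚ := congrArg (Int.cast : ℤ → ℚ) hdiv
    simp only [Int.cast_add, Int.cast_mul, Int.cast_ofNat, Int.cast_natCast, Int.cast_sub] at hdivℚ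
    linarith
  rw [taylor_eval]
  congr 1
  push_cast [hfloor]
  ring

theorem parityPoly_congr {i j : ℕ} (hij : i ≡ j [MOD 2]) : parityPoly m a i = parityPoly m a j := by
  have hmod (e : ℕ) : (i + e) % 2 = (j + e) % 2 := hij.add_right e
  simp only [parityPoly, hmod]

theorem N_BC_one_zero (n : ℕ) {q : ℕ} (hq : q ≠ 0) : N_BC n q 1 0 = q ^ n := by
  have : NeZero q := ⟨hq⟩
  have avoids (x : ZMod q) : Avoids x 1 0 := fun k hk₁ hk₂ => by omega
  simp [N_BC, avoids]

/-- For `a = 1` and `c = 0` the forbidden interval is empty, and all the tuples are counted. -/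
theorem parityPoly_one (m j : ℕ) : parityPoly m 1 j = (2 * X) ^ (m + 1) := by
  have hx : Function.Injective fun q : ℕ => (q / 2 : ℚ) :=
    fun q r hqr => by simpa using hqr
  refine eq_of_frequently_eval_eq hx ?_
  have heventually := (eventually_N_BC_eq_eval_parityPoly m 0 odd_one).and
    (Filter.eventually_ne_atTop 0)
  refine ((Nat.frequently_modEq two_ne_zero j).and_eventually heventually).mono ?_
  rintro q ⟨hqj, hq, hq0⟩
  calc (parityPoly m 1 j).eval (q / 2 : ℚ)
    _ = N_BC (m + 1) q 1 0 := by simpa [parityPoly_congr hqj] using hq.symm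
    _ = ((2 * X) ^ (m + 1) : ℚ[X]).eval (q / 2 : ℚ) := by
      simp [N_BC_one_zero _ hq0, mul_div_cancel₀]

theorem parityPoly_zero_sub_one (m a : ℕ) : parityPoly m a 0 - parityPoly m a 1 =
    ∑ t : SignedPerm (m + 1), (-1 : ℚ) ^ t.lastDescent •
      taylor (a * -(t.descents + t.lastDescent / 2 : ℚ))
        (preHilbertPoly ℚ (m + 1) 0 - taylor (-1 / 2) (preHilbertPoly ℚ (m + 1) 0)) := by
  rw [parityPoly, parityPoly, ← Finset.sum_sub_distrib]
  refine Finset.sum_congr rfl fun t _ => ?_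
  rw [map_sub, taylor_taylor]
  obtain h | h : t.lastDescent = 0 ∨ t.lastDescent = 1 := by
    unfold SignedPerm.lastDescent
    split_ifs <;> simp
  · simp only [h, Nat.cast_zero, Nat.cast_one, add_zero, zero_div, pow_zero, one_smul, Nat.zero_mod,
      Nat.mod_succ]
    ring_nf
  · simp only [h, Nat.cast_zero, Nat.cast_one, zero_add, add_zero, zero_div, pow_one, neg_smul,
      one_smul, neg_sub, Nat.mod_succ, Nat.reduceAdd, Nat.mod_self]
    ring_nf

theorem parityPoly_eq_parityPoly_zero (m a j : ℕ) : parityPoly m a j = parityPoly m a 0 := by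
  have hone : parityPoly m 1 0 - parityPoly m 1 1 = 0 := by
    rw [parityPoly_one, parityPoly_one, sub_self]
  rw [parityPoly_zero_sub_one] at hone
  simp only [Nat.cast_one, one_mul] at hone
  have hscale := sum_smul_taylor_mul_eq_zero hone a
  rw [← parityPoly_zero_sub_one, sub_eq_zero] at hscale
  obtain hj | hj := Nat.mod_two_eq_zero_or_one j
  · exact parityPoly_congr (j := 0) hj
  · exact (parityPoly_congr (j := 1) hj).trans hscale.symm

theorem exists_polynomial_N_BC (m : ℕ) (ha : Odd a) : ∃ R : ℚ[X], ∀ c : ℕ,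
    ∀ᶠ q : ℕ in Filter.atTop, (N_BC (m + 1) q (1 - c) (a + c - 1) : ℚ) =
      R.eval (q - (2 * (m + 1 : ℕ) + 1) * c : ℚ) := by
  refine ⟨(parityPoly m a 0).comp (C (1 / 2) * X), fun c => ?_⟩
  filter_upwards [eventually_N_BC_eq_eval_parityPoly m c ha] with q hq
  rw [hq, parityPoly_eq_parityPoly_zero, eval_comp]
  congr 1
  rw [eval_mul, eval_C, eval_X]
  ring

end Parity

theorem statement11_general (n a c : ℕ) (hn : 0 < n) (ha : 0 < a) :
    (∀ q : ℕ, Odd q → 2 * n < q →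
      N_C n q (-c) (a + c) = N_C n (q - 2 * n) (1 - c) (a + c - 1)) ∧
    (Odd a → ∀ P Q : ℚ[X],
      (∃ M : ℕ, ∀ q : ℕ, Odd q → M < q → P.eval (q : ℚ) = (N_BC n q (-c) (a + c) : ℚ)) →
      (∃ M : ℕ, ∀ q : ℕ, Odd q → M < q → Q.eval (q : ℚ) = (N_BC n q (1 - c) (a + c - 1) : ℚ)) →
      P = Q.comp (X - C ((2 * n + 1 : ℕ) : ℚ))) := by
  obtain ⟨m, rfl⟩ := Nat.exists_eq_add_one.2 hn
  have hlow : -(c : ℤ) = 1 - (c + 1 : ℕ) := by push_cast; ring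
  have hhigh : (a + c : ℤ) = a + (c + 1 : ℕ) - 1 := by push_cast; ring
  refine ⟨fun q hq hlt => ?_, fun hodd P Q ⟨M, hP⟩ ⟨M', hQ⟩ => ?_⟩
  · obtain ⟨r, rfl⟩ := Nat.exists_eq_add_of_le' hlt.le
    rw [Nat.add_sub_cancel, hlow, show N_C _ _ _ (a + c) = N_C _ _ _ _ from congrArg _ hhigh]
    exact ncard_validC_succ (by simpa [Nat.odd_add] using hq) ha
  · obtain ⟨R, hR⟩ := exists_polynomial_N_BC m hodd
    have hP' : ∀ q : ℕ, Odd q → M < q →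
        P.eval (q : ℚ) = N_BC (m + 1) q (1 - (c + 1 : ℕ)) (a + (c + 1 : ℕ) - 1) := by
      rwa [← hlow, ← hhigh]
    rw [eq_comp_of_odd_eval_eq hP' (hR (c + 1)), eq_comp_of_odd_eval_eq hQ (hR c), comp_assoc]
    rw [sub_comp, X_comp, C_comp, sub_sub, ← C_add]
    congr 3
    push_cast
    ring

/-- Proposition 4.7. For odd `a`: (i) for large odd `q`,
`N_C(n,q,0,a) = N_C(n,q-2n,1,a-1)`; (ii) if `P` interpolates `N_BC(n,·,0,a)` and
`Q` interpolates `N_BC(n,·,1,a-1)` on large odd integers, then `P(X) = Q(X-(2n+1))`. -/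
theorem statement11 (n a : ℕ) (hn : 2 ≤ n) (ha : 1 ≤ a) (haodd : Odd a) :
    (∃ N : ℕ, ∀ q : ℕ, Odd q → N < q →
      N_C n q 0 (a : ℤ) = N_C n (q - 2 * n) 1 ((a : ℤ) - 1)) ∧
    (∀ P Q : ℚ[X],
      (∃ M : ℕ, ∀ q : ℕ, Odd q → M < q → P.eval (q : ℚ) = (N_BC n q 0 (a : ℤ) : ℚ)) →
      (∃ M : ℕ, ∀ q : ℕ, Odd q → M < q → Q.eval (q : ℚ) = (N_BC n q 1 ((a : ℤ) - 1) : ℚ)) →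
      P = Q.comp (X - C ((2 * n + 1 : ℕ) : ℚ))) := by
  have h := statement11_general n a 0 (by omega) ha
  simp only [Nat.cast_zero, neg_zero, add_zero, sub_zero] at h
  exact ⟨⟨2 * n, h.1⟩, h.2 haodd⟩
end
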